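/- arXiv:2510.06613 — 3 statements merged into one kernel-verified Lean document; each statement's English description precedes it below -/
import Mathlib

section
/- For every real constant c₀ > 2 there exists a positive integer N(c₀) such that the following holds for every integer n ≥ N(c₀) and all real d₁, d₂ with 0 ≤ d₂ < d₁ ≤ 2 − d₂ − c₀/n. Define p, q by 1/(p+1) = 1/2 − d₁/n and 1/(q+1) = 1/2 − d₂/n; set μ(x) = [(n+2)n + (n²−3n−1)x − (n(n+2)/4)x²]/(n−1)²; choose r = −3(d₁−d₂)/(n−2d₂), s = (d₁−d₂)/(n−2d₁), k₁ = (n/(2(n−1)))(r − 2 + r/n + r²/2), k₂ = (n/(2(n−1)))(s − 2 + s/n + s²/2), θ₁ = (μ(r) − r)/p, θ₂ = (μ(s) − s)/q; and define δ₁ = (r + θ₁p)(r + θ₁(p−2) + 1) + θ₁(θ₁−1)p, δ₂ = (s + θ₂q)(s + θ₂(q−2) + 1) + θ₂(θ₂−1)q, α₁ = −((n−1)/n)k₁² + k₁(r−1) − r(r−1)/2, α₂ = −((n−1)/n)k₂² + k₂(s−1) − s(s−1)/2, β₁ = ((3/2)r − ((n+2)/n)k₁)(2θ₁(p−1) + r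 + 1)/δ₁ − (n−1)/n, β₂ = ((3/2)s − ((n+2)/n)k₂)(2θ₂(q−1) + s + 1)/δ₂ − (n−1)/n, γ₁ = ((3/2)r − ((n+2)/n)k₁)·p/δ₁, γ₂ = ((3/2)s − ((n+2)/n)k₂)·q/δ₂. Then α₁ > 0, α₂ > 0, β₁ > 0, β₂ > 0, γ₁ > 0, γ₂ > 0 and β₁β₂ − γ₁γ₂ > 0. -/
open MeasureTheory Real
open scoped InnerProductSpace

/-- The Laplacian of a function `f : ℝⁿ → ℝ`, as the sum of its second partial
derivatives. -/
noncomputable def lap {n : ℕ} (f : EuclideanSpace ℝ (Fin n) → ℝ)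
    (x : EuclideanSpace ℝ (Fin n)) : ℝ :=
  ∑ i : Fin n, fderiv ℝ (fun y => fderiv ℝ f y (EuclideanSpace.single i 1)) x
    (EuclideanSpace.single i 1)

/-!
Since `θ p = μ(r) - r`, the coefficients simplify to `β = (1 - 1/n)(μ(r) - r)(μ(r) + 1 - θ) / δ` and
`γ = (1 - 1/n) μ(r) p / δ`, so that `β₁β₂ > γ₁γ₂` becomes
`θ₁(μ(r) + 1 - θ₁) θ₂(μ(s) + 1 - θ₂) > μ(r) μ(s)`. Put `e = 1/n`, `a = d₁/n`, `b = d₂/n`,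
`D = a - b`, `η = 2e - a - b`. As `e → 0`, the difference of the two sides is
`(a + 3b)(4η - 8e² + (2e - D)(3e + 5D/2)) + O(a e η)`. Here `0 < D ≤ 2e`, and the hypothesis on `d₁`
says `η ≥ c₀ e²`, so for `c₀ > 2` the first term is at least a positive multiple of `a η` and
dominates the remainder.
-/

open Filter Asymptotics Topology

namespace PositivityCondition

/-- The paper's `μ(r)`, as a function of `e = 1 / n`. -/
noncomputable def mu (e r : ℝ) : ℝ :=
  (1 + 2 * e + (1 - 3 * e - e ^ 2) * r - (1 + 2 * e) / 4 * r ^ 2) / (1 - e) ^ 2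

/-- The paper's `θ = (μ(r) - r) / p`, where `x = d / n` and hence `p = (1 + 2x) / (1 - 2x)`. -/
noncomputable def theta (e x r : ℝ) : ℝ := (mu e r - r) * ((1 - 2 * x) / (1 + 2 * x))

/-- The paper's `δ`, with `p` eliminated by means of `θ p = μ - r`. -/
noncomputable def delta (e x r : ℝ) : ℝ :=
  mu e r * (mu e r - theta e x r) - r * (theta e x r - 1)

/-- The paper's `α`, with `k` written out and the resulting square completed. -/
noncomputable def alpha (e r : ℝ) : ℝ := r ^ 2 * (8 * e - (2 * e + r) ^ 2) / (16 * (1 - e))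

/-- The paper's `β`, brought over the common denominator `δ` by `mul_sub_delta_eq`. -/
noncomputable def beta (e x r : ℝ) : ℝ :=
  (1 - e) * ((mu e r - r) * (mu e r + 1 - theta e x r)) / delta e x r

/-- The paper's `γ`, where `p = (1 + 2x) / (1 - 2x)`. -/
noncomputable def gamma (e x r : ℝ) : ℝ :=
  (1 - e) * (mu e r * ((1 + 2 * x) / (1 - 2 * x))) / delta e x r

/-- `β₁β₂ - γ₁γ₂` up to a positive factor, for the halves `(x, r)` and `(y, s)`. -/
noncomputable def excess (e x r y s : ℝ) : ℝ :=
  theta e x r * (mu e r + 1 - theta e x r) * (theta e y s * (mu e s + 1 - theta e y s)) -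
    mu e r * mu e s

/-- The inequalities on the data of one half of the problem from which the positivity of its
coefficients `α`, `β`, `γ` is read off. -/
structure PositiveHalf (e x r : ℝ) : Prop where
  lt_one : e < 1
  neg_half_lt : -(1 / 2) < x
  lt_half : x < 1 / 2
  ne_zero : r ≠ 0
  sq_lt : (2 * e + r) ^ 2 < 8 * e
  mu_pos : 0 < mu e r
  mu_sub_pos : 0 < mu e r - r
  mu_add_one_sub_theta_pos : 0 < mu e r + 1 - theta e x r
  delta_pos : 0 < delta e x r

namespace PositiveHalf

variable {e x r y s : ℝ}

theorem exponent_pos (h : PositiveHalf e x r) : 0 < (1 + 2 * x) / (1 - 2 * x) :=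
  div_pos (by linarith [h.neg_half_lt]) (by linarith [h.lt_half])

theorem alpha_pos (h : PositiveHalf e x r) : 0 < alpha e r :=
  div_pos (mul_pos (sq_pos_of_ne_zero h.ne_zero) (sub_pos.2 h.sq_lt)) (by linarith [h.lt_one])

theorem beta_pos (h : PositiveHalf e x r) : 0 < beta e x r :=
  div_pos (mul_pos (sub_pos.2 h.lt_one) (mul_pos h.mu_sub_pos h.mu_add_one_sub_theta_pos))
    h.delta_pos

theorem gamma_pos (h : PositiveHalf e x r) : 0 < gamma e x r :=
  div_pos (mul_pos (sub_pos.2 h.lt_one) (mul_pos h.mu_pos h.exponent_pos)) h.delta_pos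

theorem beta_eq (h : PositiveHalf e x r) :
    beta e x r = (1 - e) * ((1 + 2 * x) / (1 - 2 * x)) / delta e x r *
      (theta e x r * (mu e r + 1 - theta e x r)) := by
  have h₁ : 1 + 2 * x ≠ 0 := by linarith [h.neg_half_lt]
  have h₂ : 1 - 2 * x ≠ 0 := by linarith [h.lt_half]
  have hmu : mu e r - r = (1 + 2 * x) / (1 - 2 * x) * theta e x r := by
    rw [theta]
    field_simp
  rw [beta, hmu]
  ring

theorem det_pos (h₁ : PositiveHalf e x r) (h₂ : PositiveHalf e y s) (h : 0 < excess e x r y s) :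
    0 < beta e x r * beta e y s - gamma e x r * gamma e y s := by
  have hscale {x r : ℝ} (h : PositiveHalf e x r) :
      0 < (1 - e) * ((1 + 2 * x) / (1 - 2 * x)) / delta e x r :=
    div_pos (mul_pos (sub_pos.2 h.lt_one) h.exponent_pos) h.delta_pos
  have hpos := mul_pos (mul_pos (hscale h₁) (hscale h₂)) h
  rw [excess] at hpos
  rw [h₁.beta_eq, h₂.beta_eq, gamma, gamma]
  linear_combination hpos

end PositiveHalf

section ExactIdentities

variable {n x p r k θ : ℝ}

theorem eq_div_of_one_div_add_one_eq (hx : x ≠ 1 / 2) (hp : 1 / (p + 1) = 1 / 2 - x) :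
    p = (1 + 2 * x) / (1 - 2 * x) := by
  have hx' : 1 - 2 * x ≠ 0 := fun h => hx (by linarith)
  have hp' : p + 1 ≠ 0 := fun h => hx (by rw [h, div_zero] at hp; linarith)
  rw [div_eq_iff hp'] at hp
  rw [eq_div_iff hx']
  linear_combination -2 * hp

theorem mu_one_div (hn : n ≠ 0) :
    ((n + 2) * n + (n ^ 2 - 3 * n - 1) * r - n * (n + 2) / 4 * r ^ 2) / (n - 1) ^ 2 =
      mu (1 / n) r := by
  have : (n - 1) ^ 2 = n ^ 2 * (1 - 1 / n) ^ 2 := by field_simp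
  rw [mu, this, ← div_div]
  congr 1
  field_simp

theorem three_halves_mul_sub_eq (hn : n ≠ 0) (hn₁ : n ≠ 1)
    (hk : k = n / (2 * (n - 1)) * (r - 2 + r / n + r ^ 2 / 2)) :
    3 / 2 * r - (n + 2) / n * k = (1 - 1 / n) * mu (1 / n) r := by
  have : n - 1 ≠ 0 := sub_ne_zero.2 hn₁
  rw [hk, ← mu_one_div hn]
  field_simp
  ring

theorem alpha_one_div (hn : n ≠ 0) (hn₁ : n ≠ 1)
    (hk : k = n / (2 * (n - 1)) * (r - 2 + r / n + r ^ 2 / 2)) :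
    -((n - 1) / n) * k ^ 2 + k * (r - 1) - r * (r - 1) / 2 = alpha (1 / n) r := by
  have : n - 1 ≠ 0 := sub_ne_zero.2 hn₁
  rw [hk, alpha]
  field_simp
  ring

variable {d μ δ α β γ : ℝ}

theorem delta_eq (h : θ * p = μ - r) :
    (r + θ * p) * (r + θ * (p - 2) + 1) + θ * (θ - 1) * p = μ * (μ - θ) - r * (θ - 1) := by
  linear_combination (r + θ * p + μ - θ) * h

theorem mul_sub_delta_eq (h : θ * p = μ - r) :
    μ * (2 * θ * (p - 1) + r + 1) - (μ * (μ - θ) - r * (θ - 1)) = (μ - r) * (μ + 1 - θ) := by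
  linear_combination 2 * μ * h

theorem coefficients_eq (hn : 1 < n) (h : PositiveHalf (1 / n) (d / n) r)
    (hp : 1 / (p + 1) = 1 / 2 - d / n)
    (hk : k = n / (2 * (n - 1)) * (r - 2 + r / n + r ^ 2 / 2))
    (hμ : μ = ((n + 2) * n + (n ^ 2 - 3 * n - 1) * r - n * (n + 2) / 4 * r ^ 2) / (n - 1) ^ 2)
    (hθ : θ = (μ - r) / p)
    (hδ : δ = (r + θ * p) * (r + θ * (p - 2) + 1) + θ * (θ - 1) * p)
    (hα : α = -((n - 1) / n) * k ^ 2 + k * (r - 1) - r * (r - 1) / 2)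
    (hβ : β = (3 / 2 * r - (n + 2) / n * k) * (2 * θ * (p - 1) + r + 1) / δ - (n - 1) / n)
    (hγ : γ = (3 / 2 * r - (n + 2) / n * k) * p / δ) :
    α = alpha (1 / n) r ∧ β = beta (1 / n) (d / n) r ∧ γ = gamma (1 / n) (d / n) r := by
  have hn₀ : n ≠ 0 := by positivity
  have hp' : p = (1 + 2 * (d / n)) / (1 - 2 * (d / n)) :=
    eq_div_of_one_div_add_one_eq h.lt_half.ne hp
  have hp₀ : p ≠ 0 := hp' ▸ h.exponent_pos.ne'
  have hμ' : μ = mu (1 / n) r := hμ.trans (mu_one_div hn₀)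
  have hθp : θ * p = μ - r := by rw [hθ, div_mul_cancel₀ _ hp₀]
  have hθ' : θ = theta (1 / n) (d / n) r := by
    rw [hθ, hμ', hp', theta, div_div_eq_mul_div, mul_div_assoc]
  have hδ' : δ = delta (1 / n) (d / n) r := by
    rw [hδ, delta_eq hθp, delta, ← hμ', ← hθ']
  have hδ₀ : δ ≠ 0 := hδ' ▸ h.delta_pos.ne'
  have hdiff := three_halves_mul_sub_eq hn₀ hn.ne' hk
  refine ⟨hα.trans (alpha_one_div hn₀ hn.ne' hk), ?_, ?_⟩
  · rw [hβ, hdiff, beta, ← hδ', ← hμ', ← hθ', ← mul_sub_delta_eq hθp, ← delta_eq hθp, ← hδ]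
    field_simp
  · rw [hγ, hdiff, gamma, ← hδ', ← hp', mul_assoc]

end ExactIdentities

section Expansions

variable {α : Type*} {l : Filter α} {e x r : α → ℝ}

theorem isBigO_div_of_tendsto_one {f g d : α → ℝ} (hf : f =O[l] g) (hd : Tendsto d l (𝓝 1)) :
    (fun z => f z / d z) =O[l] g := by
  simpa only [div_eq_mul_inv, mul_one] using hf.mul ((hd.inv₀ one_ne_zero).isBigO_one ℝ)

theorem tendsto_mu (he : Tendsto e l (𝓝 0)) (hr : Tendsto r l (𝓝 0)) :
    Tendsto (fun z => mu (e z) (r z)) l (𝓝 1) := by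
  have hmu : ContinuousAt (fun q : ℝ × ℝ => mu q.1 q.2) (0, 0) := by
    unfold mu
    fun_prop (disch := norm_num)
  have hlim := hmu.tendsto.comp (he.prodMk_nhds hr)
  rwa [show mu 0 0 = 1 by norm_num [mu]] at hlim

theorem tendsto_one_add_two_mul (hx : Tendsto x l (𝓝 0)) :
    Tendsto (fun z => 1 + 2 * x z) l (𝓝 1) := by
  simpa using (hx.const_mul 2).const_add 1

theorem isBigO_cube_sq (he : Tendsto e l (𝓝 0)) :
    (fun z => e z ^ 3) =O[l] fun z => e z ^ 2 :=
  ((isBigO_refl (fun z => e z ^ 2) l).mul (he.isBigO_one ℝ)).congr (fun _ => (pow_succ ..).symm)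
    fun _ => mul_one _

theorem isBigO_self_mul (hx : x =O[l] e) : (fun z => e z * x z) =O[l] fun z => e z ^ 2 := by
  simpa only [sq] using (isBigO_refl e l).mul hx

theorem isBigO_quadratic (hr : r =O[l] e) :
    (fun z => 7 * e z ^ 2 - e z * r z - r z ^ 2 / 4) =O[l] fun z => e z ^ 2 := by
  have hr₂ : (fun z => r z ^ 2 / 4) =O[l] fun z => e z ^ 2 := by
    simpa only [div_eq_inv_mul] using (hr.pow 2).const_mul_left 4⁻¹
  exact (((isBigO_refl _ l).const_mul_left 7).sub (isBigO_self_mul hr)).sub hr₂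

theorem isBigO_mu_sub_self (he : Tendsto e l (𝓝 0)) (hr : r =O[l] e) :
    (fun z => mu (e z) (r z) - r z -
      (1 + 4 * e z + (7 * e z ^ 2 - e z * r z - r z ^ 2 / 4))) =O[l] fun z => e z ^ 3 := by
  have hden : Tendsto (fun z => (1 - e z) ^ 2) l (𝓝 1) := by
    simpa using (he.const_sub 1).pow 2
  have hcube : (fun z => (10 - 7 * e z) * e z ^ 3) =O[l] fun z => e z ^ 3 := by
    simpa only [one_mul] using
      (((he.const_mul 7).const_sub 10).isBigO_one ℝ).mul (isBigO_refl (fun z => e z ^ 3) l)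
  have hmixed : (fun z => (4 - e z) * (e z * (e z * r z + r z ^ 2 / 4))) =O[l]
      fun z => e z ^ 3 := by
    have hquad := ((isBigO_refl _ l).const_mul_left 7).sub (isBigO_quadratic hr)
    refine (((he.const_sub 4).isBigO_one ℝ).mul ((isBigO_refl e l).mul hquad)).congr ?_ ?_ <;>
      intro z <;> ring
  refine (isBigO_div_of_tendsto_one (hcube.sub hmixed) hden).congr' ?_ .rfl
  filter_upwards [hden.eventually_ne one_ne_zero] with z hz
  have : 1 - e z ≠ 0 := (pow_ne_zero_iff two_ne_zero).1 hz
  rw [mu]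
  field_simp
  ring

theorem isBigO_theta_sub (he : Tendsto e l (𝓝 0)) (hx : x =O[l] e) (hr : r =O[l] e) :
    (fun z => theta (e z) (x z) (r z) - (1 + 4 * (e z - x z) +
      (7 * e z ^ 2 - e z * r z - r z ^ 2 / 4 - 16 * e z * x z + 8 * x z ^ 2))) =O[l]
      fun z => e z ^ 3 := by
  have hx₀ := hx.trans_tendsto he
  have hmu : (fun z => (mu (e z) (r z) - r z -
      (1 + 4 * e z + (7 * e z ^ 2 - e z * r z - r z ^ 2 / 4))) * (1 - 2 * x z)) =O[l]
      fun z => e z ^ 3 := by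
    simpa only [mul_one] using
      (isBigO_mu_sub_self he hr).mul (((hx₀.const_mul 2).const_sub 1).isBigO_one ℝ)
  have hcubic : (fun z => x z * (4 * (7 * e z ^ 2 - e z * r z - r z ^ 2 / 4) -
      32 * (e z * x z) + 16 * x z ^ 2)) =O[l] fun z => e z ^ 3 := by
    have hex := isBigO_self_mul hx
    exact (hx.mul ((((isBigO_quadratic hr).const_mul_left 4).sub (hex.const_mul_left 32)).add
      ((hx.pow 2).const_mul_left 16))).congr_right fun z => by ring
  have hden := tendsto_one_add_two_mul hx₀
  refine (isBigO_div_of_tendsto_one (hmu.sub hcubic) hden).congr' ?_ .rfl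
  filter_upwards [hden.eventually_ne one_ne_zero] with z hz
  rw [theta]
  field_simp
  ring

theorem isBigO_theta_sub_one_sub (he : Tendsto e l (𝓝 0)) (hx : x =O[l] e) (hr : r =O[l] e) :
    (fun z => theta (e z) (x z) (r z) - 1 - 4 * (e z - x z)) =O[l] fun z => e z ^ 2 := by
  have hex := isBigO_self_mul hx
  exact ((((isBigO_theta_sub he hx hr).trans (isBigO_cube_sq he)).add
    (isBigO_quadratic hr)).add ((hex.const_mul_left (-16)).add
      ((hx.pow 2).const_mul_left 8))).congr_left fun z => by ring

theorem isBigO_mu_sub_theta_sub (he : Tendsto e l (𝓝 0)) (hx : x =O[l] e) (hr : r =O[l] e) :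
    (fun z => mu (e z) (r z) - theta (e z) (x z) (r z) -
      (r z + 4 * x z + (16 * e z * x z - 8 * x z ^ 2))) =O[l] fun z => x z * e z ^ 2 := by
  have hx₀ := hx.trans_tendsto he
  have hex := isBigO_self_mul hx
  have hfactor := (((isBigO_mu_sub_self he hr).trans (isBigO_cube_sq he)).add
    (isBigO_quadratic hr)).add ((hex.const_mul_left (-8)).add ((hx.pow 2).const_mul_left 4))
  have hden := tendsto_one_add_two_mul hx₀
  refine (isBigO_div_of_tendsto_one
    (((isBigO_refl x l).const_mul_left 4).mul hfactor) hden).congr' ?_ .rfl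
  filter_upwards [hden.eventually_ne one_ne_zero] with z hz
  have hθ : theta (e z) (x z) (r z) * (1 + 2 * x z) = (mu (e z) (r z) - r z) * (1 - 2 * x z) := by
    rw [theta, mul_assoc, div_mul_cancel₀ _ hz]
  rw [div_eq_iff hz]
  linear_combination hθ

theorem eventually_positiveHalf (he : Tendsto e l (𝓝 0)) (hx : x =O[l] e) (hr : r =O[l] e)
    (hepos : ∀ᶠ z in l, 0 < e z) (hr₀ : ∀ᶠ z in l, r z ≠ 0)
    (hδ : ∀ᶠ z in l, 0 < delta (e z) (x z) (r z)) :
    ∀ᶠ z in l, PositiveHalf (e z) (x z) (r z) := by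
  have hx₀ := hx.trans_tendsto he
  have hr₀' := hr.trans_tendsto he
  have hmu := tendsto_mu he hr₀'
  have htheta : Tendsto (fun z => theta (e z) (x z) (r z)) l (𝓝 1) := by
    have hsmall := (isBigO_theta_sub_one_sub he hx hr).trans_tendsto
      (by simpa using he.pow 2 : Tendsto (fun z => e z ^ 2) l (𝓝 0))
    simpa using (hsmall.add ((he.sub hx₀).const_mul 4)).add_const 1
  have hsq : (fun z => (2 * e z + r z) ^ 2) =o[l] e := by
    simpa only [sq, one_mul] using ((((isLittleO_one_iff ℝ).2 he).const_mul_left 2).add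
      ((isLittleO_one_iff ℝ).2 hr₀')).mul_isBigO (((isBigO_refl e l).const_mul_left 2).add hr)
  filter_upwards [he.eventually_lt_const one_pos,
    hx₀.eventually_const_lt (by norm_num : -(1 / 2 : ℝ) < 0),
    hx₀.eventually_lt_const (by norm_num : (0 : ℝ) < 1 / 2), hr₀, hsq.bound one_pos, hepos,
    hmu.eventually_const_lt one_pos,
    (hmu.sub hr₀').eventually_const_lt (by norm_num : (0 : ℝ) < 1 - 0),
    ((hmu.add_const 1).sub htheta).eventually_const_lt (by norm_num : (0 : ℝ) < 1 + 1 - 1), hδ]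
    with z he₁ hlower hupper hr_ne hsq' he' hmu_pos hdiff_pos hfactor_pos hδ_pos
  refine ⟨he₁, hlower, hupper, hr_ne, ?_, hmu_pos, hdiff_pos, hfactor_pos, hδ_pos⟩
  rw [Real.norm_of_nonneg (sq_nonneg _), Real.norm_of_nonneg he'.le] at hsq'
  linarith

theorem isBigO_div_one_sub_two_mul_sub {f : α → ℝ} (hx : Tendsto x l (𝓝 0)) :
    (fun z => f z / (1 - 2 * x z) - f z - 2 * x z * f z) =O[l] fun z => x z ^ 2 * f z := by
  have hden : Tendsto (fun z => 1 - 2 * x z) l (𝓝 1) := by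
    simpa using (hx.const_mul 2).const_sub 1
  refine (isBigO_div_of_tendsto_one
    ((isBigO_refl (fun z => x z ^ 2 * f z) l).const_mul_left 4) hden).congr' ?_ .rfl
  filter_upwards [hden.eventually_ne one_ne_zero] with z hz
  rw [div_eq_iff hz, sub_mul, sub_mul, div_mul_cancel₀ _ hz]
  ring

end Expansions

/-- The rescaled parameters `e = 1 / n`, `a = d₁ / n`, `b = d₂ / n` and the constraints on them;
`c` is the constant `c₀`. -/
structure Regime (c : ℝ) where
  e : ℝ
  a : ℝ
  b : ℝ
  c_pos : 0 < c
  e_pos : 0 < e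
  b_nonneg : 0 ≤ b
  b_lt_a : b < a
  add_le : a + b ≤ 2 * e - c * e ^ 2

namespace Regime

variable {c : ℝ}

/-- The limit `e → 0`, uniformly in `a` and `b`. -/
def limit (c : ℝ) : Filter (Regime c) := comap e (𝓝 0)

/-- The gap `(d₁ - d₂) / n`. -/
def diff (z : Regime c) : ℝ := z.a - z.b

/-- How far `a + b` stays below the critical value `2 * e`; at least `c * e ^ 2`. -/
def slack (z : Regime c) : ℝ := 2 * z.e - z.a - z.b

/-- The common leading term of `μ - θ` and `δ` in both halves. -/
def weight (z : Regime c) : ℝ := z.a + 3 * z.b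

/-- The paper's `r`. -/
noncomputable def r (z : Regime c) : ℝ := -3 * (z.diff / (1 - 2 * z.b))

/-- The paper's `s`. -/
noncomputable def s (z : Regime c) : ℝ := z.diff / (1 - 2 * z.a)

/-- The deviation `θ₁ - 1`. -/
noncomputable def v₁ (z : Regime c) : ℝ := theta z.e z.a z.r - 1

/-- The deviation `θ₂ - 1`. -/
noncomputable def v₂ (z : Regime c) : ℝ := theta z.e z.b z.s - 1

/-- The difference `μ(r) - θ₁`. -/
noncomputable def w₁ (z : Regime c) : ℝ := mu z.e z.r - theta z.e z.a z.r

/-- The difference `μ(s) - θ₂`. -/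
noncomputable def w₂ (z : Regime c) : ℝ := mu z.e z.s - theta z.e z.b z.s

section Orders

theorem diff_pos (z : Regime c) : 0 < z.diff := sub_pos.2 z.b_lt_a

theorem a_pos (z : Regime c) : 0 < z.a := z.b_nonneg.trans_lt z.b_lt_a

theorem a_le_weight (z : Regime c) : z.a ≤ z.weight := by
  rw [weight]
  linarith [z.b_nonneg]

theorem mul_sq_le_slack (z : Regime c) : c * z.e ^ 2 ≤ z.slack := by
  rw [slack]
  linarith [z.add_le]

theorem slack_pos (z : Regime c) : 0 < z.slack :=
  (mul_pos z.c_pos (pow_pos z.e_pos 2)).trans_le z.mul_sq_le_slack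

theorem a_le_two_mul_e (z : Regime c) : z.a ≤ 2 * z.e := by
  have := z.slack_pos
  rw [slack] at this
  linarith [z.b_nonneg]

theorem diff_le_two_mul_e (z : Regime c) : z.diff ≤ 2 * z.e :=
  (sub_le_self _ z.b_nonneg).trans z.a_le_two_mul_e

theorem tendsto_e : Tendsto (e : Regime c → ℝ) (limit c) (𝓝 0) := tendsto_comap

theorem isBigO_a : a =O[limit c] e :=
  .of_bound 2 <| .of_forall fun z => by
    simpa only [Real.norm_of_nonneg z.a_pos.le, Real.norm_of_nonneg z.e_pos.le]
      using z.a_le_two_mul_e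

theorem isBigO_b : b =O[limit c] a :=
  isBigO_of_le _ fun z => by
    simpa only [Real.norm_of_nonneg z.b_nonneg, Real.norm_of_nonneg z.a_pos.le] using z.b_lt_a.le

theorem isBigO_b_e : b =O[limit c] e := isBigO_b.trans isBigO_a

theorem isBigO_diff : diff =O[limit c] a := (isBigO_refl a _).sub isBigO_b

theorem isBigO_diff_e : diff =O[limit c] e := isBigO_diff.trans isBigO_a

theorem isBigO_weight : weight =O[limit c] a := (isBigO_refl a _).add (isBigO_b.const_mul_left 3)

theorem isBigO_slack : slack =O[limit c] e :=
  (((isBigO_refl e _).const_mul_left 2).sub isBigO_a).sub isBigO_b_e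

theorem isBigO_e_sq : (fun z => e z ^ 2) =O[limit c] slack :=
  .of_bound c⁻¹ <| .of_forall fun z => by
    rw [Real.norm_of_nonneg (sq_nonneg _), Real.norm_of_nonneg z.slack_pos.le, inv_mul_eq_div,
      le_div_iff₀' z.c_pos]
    exact z.mul_sq_le_slack

theorem isBigO_a_mul_e : (fun z => a z * e z) =O[limit c] a := by
  simpa only [mul_one] using (isBigO_refl a (limit c)).mul (tendsto_e.isBigO_one ℝ)

theorem isBigO_a_mul_e_slack : (fun z => a z * e z) =O[limit c] slack :=
  ((isBigO_a.mul (isBigO_refl e _)).congr_right fun _ => (sq _).symm).trans isBigO_e_sq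

theorem isBigO_a_mul_e_sq : (fun z => a z * e z ^ 2) =O[limit c] fun z => a z * e z := by
  simpa only [sq, mul_one, mul_assoc] using
    (isBigO_refl (fun z => a z * e z) (limit c)).mul (tendsto_e.isBigO_one ℝ)

theorem isBigO_r_add_three_mul_diff_add :
    (fun z => r z + 3 * diff z + 6 * (b z * diff z)) =O[limit c] fun z => a z * e z ^ 2 := by
  have hexp := (isBigO_div_one_sub_two_mul_sub (f := diff)
    (isBigO_b_e.trans_tendsto (tendsto_e (c := c)))).const_mul_left (-3)
  refine (hexp.trans ((isBigO_b_e.pow 2).mul isBigO_diff)).congr (fun z => ?_) fun _ => mul_comm ..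
  rw [r]
  ring

theorem isBigO_s_sub_diff_sub :
    (fun z => s z - diff z - 2 * (a z * diff z)) =O[limit c] fun z => a z * e z ^ 2 := by
  have hexp := isBigO_div_one_sub_two_mul_sub (f := diff)
    (isBigO_a.trans_tendsto (tendsto_e (c := c)))
  refine (hexp.trans ((isBigO_a.pow 2).mul isBigO_diff)).congr (fun z => ?_) fun _ => mul_comm ..
  rw [s]
  ring

theorem isBigO_r_add_three_mul_diff :
    (fun z => r z + 3 * diff z) =O[limit c] fun z => a z * e z := by
  have hquad : (fun z => b z * diff z) =O[limit c] fun z => a z * e z :=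
    isBigO_b.mul isBigO_diff_e
  exact ((isBigO_r_add_three_mul_diff_add.trans isBigO_a_mul_e_sq).sub
    (hquad.const_mul_left 6)).congr_left fun z => by ring

theorem isBigO_s_sub_diff : (fun z => s z - diff z) =O[limit c] fun z => a z * e z := by
  have hquad : (fun z => a z * diff z) =O[limit c] fun z => a z * e z :=
    (isBigO_refl a _).mul isBigO_diff_e
  exact ((isBigO_s_sub_diff_sub.trans isBigO_a_mul_e_sq).add
    (hquad.const_mul_left 2)).congr_left fun z => by ring

theorem isBigO_r : r =O[limit c] a :=
  ((isBigO_r_add_three_mul_diff.trans isBigO_a_mul_e).sub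
    (isBigO_diff.const_mul_left 3)).congr_left fun z => by ring

theorem isBigO_r_e : r =O[limit c] e := isBigO_r.trans isBigO_a

theorem isBigO_s : s =O[limit c] a :=
  ((isBigO_s_sub_diff.trans isBigO_a_mul_e).add isBigO_diff).congr_left fun z => by ring

theorem isBigO_s_e : s =O[limit c] e := isBigO_s.trans isBigO_a

end Orders

section LeadingTerms

theorem isBigO_v₁_add_two_mul_diff : (fun z => v₁ z + 2 * diff z) =O[limit c] slack := by
  refine (((isBigO_theta_sub_one_sub tendsto_e isBigO_a isBigO_r_e).trans isBigO_e_sq).add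
    ((isBigO_refl slack _).const_mul_left 2)).congr_left fun z => ?_
  rw [v₁, diff, slack]
  ring

theorem isBigO_v₂_sub_two_mul_diff : (fun z => v₂ z - 2 * diff z) =O[limit c] slack := by
  refine (((isBigO_theta_sub_one_sub tendsto_e isBigO_b_e isBigO_s_e).trans isBigO_e_sq).add
    ((isBigO_refl slack _).const_mul_left 2)).congr_left fun z => ?_
  rw [v₂, diff, slack]
  ring

theorem isBigO_v₁ : v₁ =O[limit c] e :=
  ((isBigO_v₁_add_two_mul_diff.trans isBigO_slack).sub
    (isBigO_diff_e.const_mul_left 2)).congr_left fun z => by ring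

theorem isBigO_v₂ : v₂ =O[limit c] e :=
  ((isBigO_v₂_sub_two_mul_diff.trans isBigO_slack).add
    (isBigO_diff_e.const_mul_left 2)).congr_left fun z => by ring

theorem isBigO_v₁_add_v₂ : (fun z => v₁ z + v₂ z) =O[limit c] slack :=
  (isBigO_v₁_add_two_mul_diff.add isBigO_v₂_sub_two_mul_diff).congr_left fun z => by ring

theorem isBigO_v₁_mul_v₂ : (fun z => v₁ z * v₂ z) =O[limit c] slack :=
  ((isBigO_v₁.mul isBigO_v₂).congr_right fun _ => (sq _).symm).trans isBigO_e_sq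

theorem isBigO_v₁_mul_v₂_add :
    (fun z => v₁ z * v₂ z + 4 * diff z ^ 2) =O[limit c] fun z => e z * slack z :=
  ((isBigO_v₂.mul isBigO_v₁_add_two_mul_diff).sub
    ((isBigO_diff_e.const_mul_left 2).mul isBigO_v₂_sub_two_mul_diff)).congr_left
    fun z => by ring

theorem isBigO_v₁_add_v₂_sub :
    (fun z => v₁ z + v₂ z -
      (4 * slack z - 2 * e z ^ 2 + 2 * (e z * diff z) + 3 / 2 * diff z ^ 2)) =O[limit c]
      fun z => e z * slack z := by
  have htheta₁ := isBigO_theta_sub (tendsto_e (c := c)) isBigO_a isBigO_r_e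
  have htheta₂ := isBigO_theta_sub (tendsto_e (c := c)) isBigO_b_e isBigO_s_e
  have hcube : (fun z => e z ^ 3) =O[limit c] fun z => e z * slack z :=
    ((isBigO_refl e _).mul isBigO_e_sq).congr_left fun z => by ring
  have hr : (fun z => r z + 3 * diff z) =O[limit c] slack :=
    isBigO_r_add_three_mul_diff.trans isBigO_a_mul_e_slack
  have hs : (fun z => s z - diff z) =O[limit c] slack :=
    isBigO_s_sub_diff.trans isBigO_a_mul_e_slack
  have hlinear := (isBigO_refl e _).mul (hr.add hs)
  have hsquares := ((isBigO_r_e.sub (isBigO_diff_e.const_mul_left 3)).mul hr).add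
    ((isBigO_s_e.add isBigO_diff_e).mul hs)
  have hslack := (isBigO_slack (c := c)).mul (isBigO_refl slack _)
  refine ((((htheta₁.add htheta₂).trans hcube).sub
    (hlinear.add (hsquares.const_mul_left (1 / 4)))).add
    (hslack.const_mul_left 4)).congr_left fun z => ?_
  rw [v₁, v₂, diff, slack]
  ring

theorem isBigO_w₁_sub_weight : (fun z => w₁ z - weight z) =O[limit c] fun z => a z * e z := by
  have hquad : (fun z => 16 * e z * a z - 8 * a z ^ 2) =O[limit c] fun z => a z * e z :=
    ((isBigO_refl a _).mul (((isBigO_refl e _).const_mul_left 16).sub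
      (isBigO_a.const_mul_left 8))).congr_left fun z => by ring
  refine ((((isBigO_mu_sub_theta_sub tendsto_e isBigO_a isBigO_r_e).trans isBigO_a_mul_e_sq).add
    hquad).add isBigO_r_add_three_mul_diff).congr_left fun z => ?_
  rw [w₁, weight, diff]
  ring

theorem isBigO_w₂_sub_w₁_sub :
    (fun z => w₂ z - w₁ z - 2 * (diff z * weight z)) =O[limit c] fun z => a z * slack z := by
  have hcubic : (fun z => a z * e z ^ 2) =O[limit c] fun z => a z * slack z :=
    (isBigO_refl a _).mul isBigO_e_sq
  have hw₁ := isBigO_mu_sub_theta_sub (tendsto_e (c := c)) isBigO_a isBigO_r_e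
  have hw₂ := (isBigO_mu_sub_theta_sub (tendsto_e (c := c)) isBigO_b_e isBigO_s_e).trans
    (isBigO_b.mul (isBigO_refl (fun z => e z ^ 2) _))
  have hslack := (isBigO_diff (c := c)).mul (isBigO_refl slack _)
  refine ((((hw₂.sub hw₁).add (isBigO_s_sub_diff_sub.sub isBigO_r_add_three_mul_diff_add)).trans
    hcubic).sub (hslack.const_mul_left 8)).congr_left fun z => ?_
  rw [w₁, w₂, weight, diff, slack]
  ring

theorem isBigO_w₂_sub_w₁ : (fun z => w₂ z - w₁ z) =O[limit c] fun z => a z * e z :=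
  ((isBigO_w₂_sub_w₁_sub.trans ((isBigO_refl a _).mul isBigO_slack)).add
    ((isBigO_weight.mul isBigO_diff_e).const_mul_left 2)).congr_left fun z => by ring

theorem isBigO_w₂_sub_weight : (fun z => w₂ z - weight z) =O[limit c] fun z => a z * e z :=
  (isBigO_w₁_sub_weight.add isBigO_w₂_sub_w₁).congr_left fun z => by ring

theorem isBigO_w₁ : w₁ =O[limit c] a :=
  ((isBigO_w₁_sub_weight.trans isBigO_a_mul_e).add isBigO_weight).congr_left fun z => by ring

theorem isBigO_w₂ : w₂ =O[limit c] a :=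
  ((isBigO_w₂_sub_weight.trans isBigO_a_mul_e).add isBigO_weight).congr_left fun z => by ring

end LeadingTerms

section Determinant

/-- The leading term of the excess, divided by `weight`. -/
noncomputable def leadingFactor (z : Regime c) : ℝ :=
  4 * z.slack - 2 * z.e ^ 2 + 2 * (z.e * z.diff) - 5 / 2 * z.diff ^ 2

-- Substitute `θ(μ + 1 - θ) = (1 + v)(1 + w)` and `μ = 1 + v + w`.
theorem excess_eq (z : Regime c) :
    excess z.e z.a z.r z.b z.s =
      (z.v₁ + z.v₂) * z.w₁ + z.v₂ * (z.w₂ - z.w₁) + z.v₁ * z.v₂ * (z.w₁ + z.w₂) +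
        (z.v₁ + z.v₂) * (z.w₁ * z.w₂) + z.v₁ * z.v₂ * (z.w₁ * z.w₂) := by
  rw [excess, v₁, v₂, w₁, w₂]
  ring

theorem isBigO_add_mul_w₁_sub :
    (fun z => (v₁ z + v₂ z) * w₁ z - weight z *
      (4 * slack z - 2 * e z ^ 2 + 2 * (e z * diff z) + 3 / 2 * diff z ^ 2)) =O[limit c]
      fun z => a z * e z * slack z := by
  have hsum := (isBigO_weight (c := c)).mul isBigO_v₁_add_v₂_sub
  exact ((hsum.congr_right fun _ => (mul_assoc ..).symm).add
    (isBigO_w₁_sub_weight.mul isBigO_v₁_add_v₂)).congr_left fun z => by ring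

theorem isBigO_v₂_mul_sub_sub :
    (fun z => v₂ z * (w₂ z - w₁ z) - 4 * (weight z * diff z ^ 2)) =O[limit c]
      fun z => a z * e z * slack z := by
  have hskew : (fun z => diff z * (w₂ z - w₁ z - 2 * (diff z * weight z))) =O[limit c]
      fun z => a z * e z * slack z :=
    (isBigO_diff_e.mul isBigO_w₂_sub_w₁_sub).congr_right fun z => by ring
  exact ((isBigO_w₂_sub_w₁.mul isBigO_v₂_sub_two_mul_diff).add
    (hskew.const_mul_left 2)).congr_left fun z => by ring

theorem isBigO_mul_mul_add_add :
    (fun z => v₁ z * v₂ z * (w₁ z + w₂ z) + 8 * (weight z * diff z ^ 2)) =O[limit c]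
      fun z => a z * e z * slack z := by
  have hprod := (isBigO_w₁.add (isBigO_w₂ (c := c))).mul isBigO_v₁_mul_v₂_add
  have hsq := (isBigO_w₁_sub_weight.add (isBigO_w₂_sub_weight (c := c))).mul
    ((isBigO_diff_e.pow 2).trans isBigO_e_sq)
  exact ((hprod.congr_right fun _ => (mul_assoc ..).symm).sub
    (hsq.const_mul_left 4)).congr_left fun z => by ring

theorem isBigO_excess_sub :
    (fun z => excess z.e z.a z.r z.b z.s - weight z * leadingFactor z) =O[limit c]
      fun z => a z * e z * slack z := by
  have hww := (isBigO_w₁ (c := c)).mul (isBigO_w₂.trans isBigO_a)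
  refine (((isBigO_add_mul_w₁_sub.add isBigO_v₂_mul_sub_sub).add isBigO_mul_mul_add_add).add
    ((hww.mul isBigO_v₁_add_v₂).add (hww.mul isBigO_v₁_mul_v₂))).congr_left fun z => ?_
  rw [excess_eq, leadingFactor]
  ring

theorem le_leadingFactor (z : Regime c) : 4 * (1 - 2 / c) * z.slack ≤ z.leadingFactor := by
  have hc := z.c_pos
  have hsq : 8 * z.e ^ 2 ≤ 8 / c * z.slack := by
    calc 8 * z.e ^ 2 = 8 / c * (c * z.e ^ 2) := by field_simp
      _ ≤ 8 / c * z.slack := mul_le_mul_of_nonneg_left z.mul_sq_le_slack (by positivity)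
  have hfactor : 0 ≤ (2 * z.e - z.diff) * (3 * z.e + 5 / 2 * z.diff) :=
    mul_nonneg (sub_nonneg.2 z.diff_le_two_mul_e) (by linarith [z.e_pos, z.diff_pos])
  rw [leadingFactor]
  linear_combination hsq + hfactor

theorem eventually_excess_pos (hc : 2 < c) : ∀ᶠ z in limit c, 0 < excess z.e z.a z.r z.b z.s := by
  have hgap : 0 < 1 - 2 / c := sub_pos.2 ((div_lt_one (two_pos.trans hc)).2 hc)
  have hsmall : (fun z => excess z.e z.a z.r z.b z.s - weight z * leadingFactor z) =o[limit c]
      fun z => a z * slack z :=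
    isBigO_excess_sub.trans_isLittleO <| (((isLittleO_one_iff ℝ).2 tendsto_e).mul_isBigO
      (isBigO_refl (fun z => a z * slack z) _)).congr (fun z => by ring) fun _ => one_mul _
  filter_upwards [hsmall.bound hgap] with z hz
  have hpos : 0 < z.a * z.slack := mul_pos z.a_pos z.slack_pos
  have hlead : 4 * (1 - 2 / c) * (z.a * z.slack) ≤ z.weight * z.leadingFactor := by
    calc 4 * (1 - 2 / c) * (z.a * z.slack)
        = z.a * (4 * (1 - 2 / c) * z.slack) := by ring
      _ ≤ z.weight * z.leadingFactor :=
        mul_le_mul z.a_le_weight z.le_leadingFactor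
          (mul_nonneg (mul_nonneg zero_le_four hgap.le) z.slack_pos.le)
          (z.a_pos.le.trans z.a_le_weight)
  rw [Real.norm_of_nonneg hpos.le] at hz
  linarith [(abs_le.1 hz).1, mul_pos hgap hpos]

end Determinant

section Positivity

theorem eventually_pos_of_isBigO_sub_weight {f : Regime c → ℝ}
    (hf : (fun z => f z - weight z) =O[limit c] fun z => a z * e z) :
    ∀ᶠ z in limit c, 0 < f z := by
  have hsmall : (fun z => f z - weight z) =o[limit c] a := by
    refine hf.trans_isLittleO ?_
    simpa only [mul_one] using (isBigO_refl a _).mul_isLittleO ((isLittleO_one_iff ℝ).2 tendsto_e)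
  filter_upwards [hsmall.bound one_half_pos] with z hz
  rw [Real.norm_of_nonneg z.a_pos.le] at hz
  linarith [(abs_le.1 hz).1, z.a_le_weight, z.a_pos]

theorem eventually_delta_r_pos : ∀ᶠ z in limit c, 0 < delta z.e z.a z.r := by
  have hmu := (isBigO_w₁ (c := c)).mul (isBigO_v₁.add (isBigO_w₁.trans isBigO_a))
  refine eventually_pos_of_isBigO_sub_weight (((hmu.add isBigO_w₁_sub_weight).sub
    (isBigO_r.mul isBigO_v₁)).congr_left fun z => ?_)
  rw [delta, v₁, w₁]
  ring

theorem eventually_delta_s_pos : ∀ᶠ z in limit c, 0 < delta z.e z.b z.s := by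
  have hmu := (isBigO_w₂ (c := c)).mul (isBigO_v₂.add (isBigO_w₂.trans isBigO_a))
  refine eventually_pos_of_isBigO_sub_weight (((hmu.add isBigO_w₂_sub_weight).sub
    (isBigO_s.mul isBigO_v₂)).congr_left fun z => ?_)
  rw [delta, v₂, w₂]
  ring

theorem eventually_r_ne_zero : ∀ᶠ z in limit c, r z ≠ 0 := by
  filter_upwards [(isBigO_b_e.trans_tendsto tendsto_e).eventually_lt_const one_half_pos] with z hz
  exact mul_ne_zero (by norm_num) (div_pos z.diff_pos (by linarith)).ne'

theorem eventually_s_ne_zero : ∀ᶠ z in limit c, s z ≠ 0 := by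
  filter_upwards [(isBigO_a.trans_tendsto tendsto_e).eventually_lt_const one_half_pos] with z hz
  exact (div_pos z.diff_pos (by linarith)).ne'

theorem eventually_positiveHalf_r : ∀ᶠ z in limit c, PositiveHalf z.e z.a z.r :=
  eventually_positiveHalf tendsto_e isBigO_a isBigO_r_e (.of_forall e_pos) eventually_r_ne_zero
    eventually_delta_r_pos

theorem eventually_positiveHalf_s : ∀ᶠ z in limit c, PositiveHalf z.e z.b z.s :=
  eventually_positiveHalf tendsto_e isBigO_b_e isBigO_s_e (.of_forall e_pos) eventually_s_ne_zero
    eventually_delta_s_pos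

end Positivity

section Threshold

/-- The rescaling of the paper's dimension `n` and exponents `d₁`, `d₂`. -/
noncomputable def ofDimension {n d₁ d₂ : ℝ} (hc : 0 < c) (hn : 0 < n) (h₀ : 0 ≤ d₂)
    (h₁ : d₂ < d₁) (h₂ : d₁ ≤ 2 - d₂ - c / n) : Regime c where
  e := 1 / n
  a := d₁ / n
  b := d₂ / n
  c_pos := hc
  e_pos := one_div_pos.2 hn
  b_nonneg := div_nonneg h₀ hn.le
  b_lt_a := div_lt_div_of_pos_right h₁ hn
  add_le := by linear_combination div_le_div_of_nonneg_right h₂ hn.le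

theorem eventually_forall_e_eq {P : Regime c → Prop} (h : ∀ᶠ z in limit c, P z) :
    ∀ᶠ n : ℕ in atTop, ∀ z : Regime c, z.e = 1 / (n : ℝ) → P z :=
  tendsto_one_div_atTop_nhds_zero_nat.eventually (eventually_comap.1 h)

theorem sub_div_sub_two_mul {n : ℝ} (hn : n ≠ 0) (d₁ d₂ d : ℝ) :
    (d₁ - d₂) / (n - 2 * d) = (d₁ / n - d₂ / n) / (1 - 2 * (d / n)) := by
  have hden : 1 - 2 * (d / n) = (n - 2 * d) / n := by field_simp
  rw [hden, ← sub_div, div_div_div_cancel_right₀ hn]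

theorem exists_forall_positiveHalf_and_excess_pos (hc : 2 < c) :
    ∃ N : ℕ, 0 < N ∧ ∀ n : ℕ, N ≤ n → 1 < (n : ℝ) ∧ ∀ d₁ d₂ r s : ℝ,
      0 ≤ d₂ → d₂ < d₁ → d₁ ≤ 2 - d₂ - c / n →
      r = -3 * (d₁ - d₂) / (n - 2 * d₂) → s = (d₁ - d₂) / (n - 2 * d₁) →
      PositiveHalf (1 / n) (d₁ / n) r ∧ PositiveHalf (1 / n) (d₂ / n) s ∧
        0 < excess (1 / n) (d₁ / n) r (d₂ / n) s := by
  have hlarge := (eventually_forall_e_eq (eventually_positiveHalf_r.and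
    (eventually_positiveHalf_s.and (eventually_excess_pos hc)))).and (eventually_gt_atTop 1)
  obtain ⟨N, hN⟩ := hlarge.exists_forall_of_atTop
  refine ⟨N + 1, N.succ_pos, fun n hn => ?_⟩
  obtain ⟨hpos, hn₁⟩ := hN n (N.le_succ.trans hn)
  have hn₁ : 1 < (n : ℝ) := Nat.one_lt_cast.2 hn₁
  have hn₀ : 0 < (n : ℝ) := one_pos.trans hn₁
  refine ⟨hn₁, fun d₁ d₂ r s hd₂ hd hd₁ hr hs => ?_⟩
  let z := ofDimension (two_pos.trans hc) hn₀ hd₂ hd hd₁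
  have hr' : z.r = r := by
    rw [hr, mul_div_assoc, sub_div_sub_two_mul hn₀.ne']
    rfl
  have hs' : z.s = s := by
    rw [hs, sub_div_sub_two_mul hn₀.ne']
    rfl
  rw [← hr', ← hs']
  exact hpos z rfl

end Threshold

end Regime

end PositivityCondition

theorem positivity_condition_large_n (c₀ : ℝ) (hc₀ : 2 < c₀) :
    ∃ N : ℕ, 0 < N ∧ ∀ n : ℕ, N ≤ n → ∀ d₁ d₂ : ℝ,
      0 ≤ d₂ → d₂ < d₁ → d₁ ≤ 2 - d₂ - c₀ / (n : ℝ) →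
      ∀ p q r s k₁ k₂ μr μs θ₁ θ₂ δ₁ δ₂ α₁ α₂ β₁ β₂ γ₁ γ₂ : ℝ,
        1 / (p + 1) = 1 / 2 - d₁ / (n : ℝ) →
        1 / (q + 1) = 1 / 2 - d₂ / (n : ℝ) →
        r = -3 * (d₁ - d₂) / ((n : ℝ) - 2 * d₂) →
        s = (d₁ - d₂) / ((n : ℝ) - 2 * d₁) →
        k₁ = (n : ℝ) / (2 * ((n : ℝ) - 1)) * (r - 2 + r / (n : ℝ) + r ^ 2 / 2) →
        k₂ = (n : ℝ) / (2 * ((n : ℝ) - 1)) * (s - 2 + s / (n : ℝ) + s ^ 2 / 2) →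
        μr = (((n : ℝ) + 2) * (n : ℝ) + ((n : ℝ) ^ 2 - 3 * (n : ℝ) - 1) * r
            - ((n : ℝ) * ((n : ℝ) + 2) / 4) * r ^ 2) / ((n : ℝ) - 1) ^ 2 →
        μs = (((n : ℝ) + 2) * (n : ℝ) + ((n : ℝ) ^ 2 - 3 * (n : ℝ) - 1) * s
            - ((n : ℝ) * ((n : ℝ) + 2) / 4) * s ^ 2) / ((n : ℝ) - 1) ^ 2 →
        θ₁ = (μr - r) / p →
        θ₂ = (μs - s) / q →
        δ₁ = (r + θ₁ * p) * (r + θ₁ * (p - 2) + 1) + θ₁ * (θ₁ - 1) * p →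
        δ₂ = (s + θ₂ * q) * (s + θ₂ * (q - 2) + 1) + θ₂ * (θ₂ - 1) * q →
        α₁ = -(((n : ℝ) - 1) / n) * k₁ ^ 2 + k₁ * (r - 1) - r * (r - 1) / 2 →
        α₂ = -(((n : ℝ) - 1) / n) * k₂ ^ 2 + k₂ * (s - 1) - s * (s - 1) / 2 →
        β₁ = ((3 / 2) * r - ((n : ℝ) + 2) / n * k₁) *
            (2 * θ₁ * (p - 1) + r + 1) / δ₁ - ((n : ℝ) - 1) / n →
        β₂ = ((3 / 2) * s - ((n : ℝ) + 2) / n * k₂) *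
            (2 * θ₂ * (q - 1) + s + 1) / δ₂ - ((n : ℝ) - 1) / n →
        γ₁ = ((3 / 2) * r - ((n : ℝ) + 2) / n * k₁) * p / δ₁ →
        γ₂ = ((3 / 2) * s - ((n : ℝ) + 2) / n * k₂) * q / δ₂ →
        0 < α₁ ∧ 0 < α₂ ∧ 0 < β₁ ∧ 0 < β₂ ∧ 0 < γ₁ ∧ 0 < γ₂ ∧
          0 < β₁ * β₂ - γ₁ * γ₂ := by
  obtain ⟨N, hN₀, hN⟩ := PositivityCondition.Regime.exists_forall_positiveHalf_and_excess_pos hc₀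
  refine ⟨N, hN₀, fun n hn d₁ d₂ hd₂ hd hd₁ => ?_⟩
  intro p q r s k₁ k₂ μr μs θ₁ θ₂ δ₁ δ₂ α₁ α₂ β₁ β₂ γ₁ γ₂ hp hq hr hs
    hk₁ hk₂ hμr hμs hθ₁ hθ₂ hδ₁ hδ₂ hα₁ hα₂ hβ₁ hβ₂ hγ₁ hγ₂
  obtain ⟨hn₁, hpos⟩ := hN n hn
  obtain ⟨h₁, h₂, hexcess⟩ := hpos d₁ d₂ r s hd₂ hd hd₁ hr hs
  obtain ⟨rfl, rfl, rfl⟩ :=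
    PositivityCondition.coefficients_eq hn₁ h₁ hp hk₁ hμr hθ₁ hδ₁ hα₁ hβ₁ hγ₁
  obtain ⟨rfl, rfl, rfl⟩ :=
    PositivityCondition.coefficients_eq hn₁ h₂ hq hk₂ hμs hθ₂ hδ₂ hα₂ hβ₂ hγ₂
  exact ⟨h₁.alpha_pos, h₂.alpha_pos, h₁.beta_pos, h₂.beta_pos, h₁.gamma_pos, h₂.gamma_pos,
    h₁.det_pos h₂ hexcess⟩
end

section
/- For every integer n ≥ 13 and all real d₁, d₂ with 0 ≤ d₂ < d₁ ≤ 2 − d₂ − 4/n, the following holds. Define p, q by 1/(p+1) = 1/2 − d₁/n and 1/(q+1) = 1/2 − d₂/n; set μ(x) = [(n+2)n + (n²−3n−1)x − (n(n+2)/4)x²]/(n−1)²; choose r = −3(d₁−d₂)/(n−2d₂), s = (d₁−d₂)/(n−2d₁), k₁ = (n/(2(n−1)))(r − 2 + r/n + r²/2), k₂ = (n/(2(n−1)))(s − 2 + s/n + s²/2), θ₁ = (μ(r) − r)/p, θ₂ = (μ(s) − s)/q; and define δ₁ = (r + θ₁p)(r + θ₁(p−2) + 1) + θ₁(θ₁−1)p,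 δ₂ = (s + θ₂q)(s + θ₂(q−2) + 1) + θ₂(θ₂−1)q, α₁ = −((n−1)/n)k₁² + k₁(r−1) − r(r−1)/2, α₂ = −((n−1)/n)k₂² + k₂(s−1) − s(s−1)/2, β₁ = ((3/2)r − ((n+2)/n)k₁)(2θ₁(p−1) + r + 1)/δ₁ − (n−1)/n, β₂ = ((3/2)s − ((n+2)/n)k₂)(2θ₂(q−1) + s + 1)/δ₂ − (n−1)/n, γ₁ = ((3/2)r − ((n+2)/n)k₁)·p/δ₁, γ₂ = ((3/2)s − ((n+2)/n)k₂)·q/δ₂. Then α₁ > 0, α₂ > 0, β₁ > 0, β₂ > 0, γ₁ > 0, γ₂ > 0 and β₁β₂ − γ₁γ₂ > 0. -/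
open MeasureTheory Real
open scoped InnerProductSpace

/-!
Each `β` is the product of `γ` and an explicit ratio, so the determinant condition
`β₁ β₂ > γ₁ γ₂` says that the product of the two ratios `β / γ` exceeds `1`. Each `δ`, hence the
sign of `γ`, and each ratio `β / γ` depend on `n` only through `μ` once `a = d₁ / n` and
`b = d₂ / n` are fixed. They increase with `μ`, and `μ(x)` decreases in `n` for small `x`, so one
may enlarge `n` until the constraint `n ^ 2 * (a + b) ≤ 2 * (n - 2)` becomes an equality. That
equality makes everything homogeneous in `a` and `b`, and what remains are polynomial inequalities
whose coefficients in `n - 12`, `b` and `a - b` are all nonnegative.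
-/

/-- The function `μ(x)` of the statement. -/
noncomputable def muCoeff (n x : ℝ) : ℝ :=
  ((n + 2) * n + (n ^ 2 - 3 * n - 1) * x - (n * (n + 2) / 4) * x ^ 2) / (n - 1) ^ 2

/-- The coefficient `k` of the statement attached to the parameter `x` (`r` or `s`). -/
noncomputable def kCoeff (n x : ℝ) : ℝ :=
  n / (2 * (n - 1)) * (x - 2 + x / n + x ^ 2 / 2)

/-- The coefficient `θ` of the statement attached to the exponent `p` and the parameter `x`. -/
noncomputable def thetaCoeff (n p x : ℝ) : ℝ :=
  (muCoeff n x - x) / p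

/-- The coefficient `δ` of the statement attached to the exponent `p` and the parameter `x`. -/
noncomputable def deltaCoeff (n p x : ℝ) : ℝ :=
  (x + thetaCoeff n p x * p) * (x + thetaCoeff n p x * (p - 2) + 1)
    + thetaCoeff n p x * (thetaCoeff n p x - 1) * p

/-- The coefficient `α` of the statement attached to the parameter `x`. -/
noncomputable def alphaCoeff (n x : ℝ) : ℝ :=
  -((n - 1) / n) * kCoeff n x ^ 2 + kCoeff n x * (x - 1) - x * (x - 1) / 2

/-- The coefficient `β` of the statement attached to the exponent `p` and the parameter `x`. -/
noncomputable def betaCoeff (n p x : ℝ) : ℝ :=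
  ((3 / 2) * x - (n + 2) / n * kCoeff n x) * (2 * thetaCoeff n p x * (p - 1) + x + 1)
    / deltaCoeff n p x - (n - 1) / n

/-- The coefficient `γ` of the statement attached to the exponent `p` and the parameter `x`. -/
noncomputable def gammaCoeff (n p x : ℝ) : ℝ :=
  ((3 / 2) * x - (n + 2) / n * kCoeff n x) * p / deltaCoeff n p x

/-- The product `p δ` as a function of the value `u` of `μ(x)`. -/
def deltaNum (p x u : ℝ) : ℝ :=
  (p - 1) * u ^ 2 + x * (p + x)

/-- The quotient `β / γ` as a function of the value `u` of `μ(x)`. -/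
noncomputable def betaGammaRatio (p x u : ℝ) : ℝ :=
  (u - x) * ((p - 1) * u + p + x) / (p ^ 2 * u)

theorem alphaCoeff_eq {n : ℝ} (x : ℝ) (h₀ : n ≠ 0) (h₁ : n - 1 ≠ 0) :
    alphaCoeff n x = x ^ 2 * (8 * n - (n * x + 2) ^ 2) / (16 * n * (n - 1)) := by
  unfold alphaCoeff kCoeff
  field_simp
  ring

theorem alphaCoeff_pos {n x : ℝ} (hn : 1 < n) (hx : x ≠ 0) (h : (n * x + 2) ^ 2 < 8 * n) :
    0 < alphaCoeff n x := by
  have hn' : 0 < n - 1 := sub_pos.mpr hn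
  have : 0 < 8 * n - (n * x + 2) ^ 2 := sub_pos.mpr h
  rw [alphaCoeff_eq x (by positivity) hn'.ne']
  positivity

theorem deltaCoeff_eq {p : ℝ} (n x : ℝ) (hp : p ≠ 0) :
    deltaCoeff n p x = deltaNum p x (muCoeff n x) / p := by
  unfold deltaCoeff thetaCoeff deltaNum
  field_simp
  ring

theorem three_halves_mul_sub_kCoeff {n : ℝ} (x : ℝ) (h₀ : n ≠ 0) (h₁ : n - 1 ≠ 0) :
    (3 / 2) * x - (n + 2) / n * kCoeff n x = (n - 1) / n * muCoeff n x := by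
  unfold kCoeff muCoeff
  field_simp
  ring

theorem gammaCoeff_eq {n p : ℝ} (x : ℝ) (h₀ : n ≠ 0) (h₁ : n - 1 ≠ 0) (hp : p ≠ 0) :
    gammaCoeff n p x = (n - 1) / n * (p ^ 2 * muCoeff n x) / deltaNum p x (muCoeff n x) := by
  rw [gammaCoeff, three_halves_mul_sub_kCoeff x h₀ h₁, deltaCoeff_eq n x hp]
  field_simp

theorem betaCoeff_eq {n p x : ℝ} (h₀ : n ≠ 0) (h₁ : n - 1 ≠ 0) (hp : p ≠ 0)
    (hμ : muCoeff n x ≠ 0) (hδ : deltaNum p x (muCoeff n x) ≠ 0) :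
    betaCoeff n p x = betaGammaRatio p x (muCoeff n x) * gammaCoeff n p x := by
  rw [gammaCoeff_eq x h₀ h₁ hp, betaCoeff, three_halves_mul_sub_kCoeff x h₀ h₁,
    deltaCoeff_eq n x hp, thetaCoeff, betaGammaRatio]
  field_simp
  unfold deltaNum
  ring

theorem deltaNum_mono {p x u v : ℝ} (hp : 1 ≤ p) (hu : 0 ≤ u) (huv : u ≤ v) :
    deltaNum p x u ≤ deltaNum p x v := by
  have : 0 ≤ p - 1 := sub_nonneg.mpr hp
  unfold deltaNum
  gcongr

theorem betaGammaRatio_pos {p x u : ℝ} (hp : 1 ≤ p) (hu : 0 < u) (hxu : x < u)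
    (hpx : 0 < p + x) : 0 < betaGammaRatio p x u := by
  have h₁ : 0 ≤ (p - 1) * u := mul_nonneg (by linarith) hu.le
  have h₂ : 0 < (p - 1) * u + p + x := by linarith
  have : 0 < u - x := sub_pos.mpr hxu
  unfold betaGammaRatio
  positivity

theorem betaGammaRatio_mono {p x u v : ℝ} (hp : 1 ≤ p) (hu : 0 < u) (huv : u ≤ v)
    (hδ : 0 ≤ deltaNum p x u) : betaGammaRatio p x u ≤ betaGammaRatio p x v := by
  have hv : 0 < v := hu.trans_le huv
  have hdiff : betaGammaRatio p x v - betaGammaRatio p x u =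
      (v - u) * ((p - 1) * u * v + x * (p + x)) / (p ^ 2 * u * v) := by
    unfold betaGammaRatio
    field_simp
    ring
  have hmixed : deltaNum p x u ≤ (p - 1) * u * v + x * (p + x) := by
    have : (p - 1) * u * u ≤ (p - 1) * u * v :=
      mul_le_mul_of_nonneg_left huv (mul_nonneg (by linarith) hu.le)
    unfold deltaNum
    linarith
  rw [← sub_nonneg, hdiff]
  exact div_nonneg (mul_nonneg (by linarith) (hδ.trans hmixed)) (by positivity)

-- The partial fraction decomposition in `n - 1`; for small `x` all its coefficients are positive.
theorem muCoeff_eq {n : ℝ} (x : ℝ) (h : n - 1 ≠ 0) :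
    muCoeff n x = x + (1 - x ^ 2 / 4) + (4 - x - x ^ 2) / (n - 1)
      + 3 * (1 - x - x ^ 2 / 4) / (n - 1) ^ 2 := by
  unfold muCoeff
  field_simp
  ring

theorem lt_muCoeff {n x : ℝ} (hn : 1 < n) (hx : |x| ≤ 1 / 2) : x < muCoeff n x := by
  obtain ⟨hx₁, hx₂⟩ := abs_le.mp hx
  have hn' : 0 < n - 1 := sub_pos.mpr hn
  have h₀ : 0 < 1 - x ^ 2 / 4 := by nlinarith
  have h₁ : 0 ≤ (4 - x - x ^ 2) / (n - 1) := div_nonneg (by nlinarith) hn'.le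
  have h₂ : 0 ≤ 3 * (1 - x - x ^ 2 / 4) / (n - 1) ^ 2 := div_nonneg (by nlinarith) (sq_nonneg _)
  rw [muCoeff_eq x hn'.ne']
  linarith

theorem muCoeff_pos {n x : ℝ} (hn : 1 < n) (hx : |x| ≤ 1 / 2) : 0 < muCoeff n x := by
  obtain ⟨hx₁, hx₂⟩ := abs_le.mp hx
  have hn' : 0 < n - 1 := sub_pos.mpr hn
  have h₀ : 0 < x + (1 - x ^ 2 / 4) := by nlinarith
  have h₁ : 0 ≤ (4 - x - x ^ 2) / (n - 1) := div_nonneg (by nlinarith) hn'.le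
  have h₂ : 0 ≤ 3 * (1 - x - x ^ 2 / 4) / (n - 1) ^ 2 := div_nonneg (by nlinarith) (sq_nonneg _)
  rw [muCoeff_eq x hn'.ne']
  linarith

theorem muCoeff_anti {n ν x : ℝ} (hn : 1 < n) (hν : n ≤ ν) (hx : |x| ≤ 1 / 2) :
    muCoeff ν x ≤ muCoeff n x := by
  obtain ⟨hx₁, hx₂⟩ := abs_le.mp hx
  have hn' : 0 < n - 1 := sub_pos.mpr hn
  have hν' : 0 < ν - 1 := by linarith
  have h₁ : 0 ≤ 4 - x - x ^ 2 := by nlinarith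
  have h₂ : 0 ≤ 3 * (1 - x - x ^ 2 / 4) := by nlinarith
  rw [muCoeff_eq x hn'.ne', muCoeff_eq x hν'.ne']
  gcongr

theorem gammaCoeff_pos {n p x : ℝ} (hn : 1 < n) (hp : p ≠ 0) (hx : |x| ≤ 1 / 2)
    (hδ : 0 < deltaNum p x (muCoeff n x)) : 0 < gammaCoeff n p x := by
  have hn' : 0 < n - 1 := sub_pos.mpr hn
  have hμ := muCoeff_pos hn hx
  rw [gammaCoeff_eq x (by positivity) hn'.ne' hp]
  positivity

theorem betaCoeff_eq_mul_gammaCoeff {n p x : ℝ} (hn : 1 < n) (hp : p ≠ 0) (hx : |x| ≤ 1 / 2)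
    (hδ : 0 < deltaNum p x (muCoeff n x)) :
    betaCoeff n p x = betaGammaRatio p x (muCoeff n x) * gammaCoeff n p x :=
  betaCoeff_eq (by linarith) (sub_pos.mpr hn).ne' hp (muCoeff_pos hn hx).ne' hδ.ne'

theorem betaGammaRatio_muCoeff_pos {n p x : ℝ} (hn : 1 < n) (hp : 1 ≤ p) (hx : |x| ≤ 1 / 2) :
    0 < betaGammaRatio p x (muCoeff n x) :=
  betaGammaRatio_pos hp (muCoeff_pos hn hx) (lt_muCoeff hn hx) (by linarith [(abs_le.mp hx).1])

theorem betaCoeff_pos {n p x : ℝ} (hn : 1 < n) (hp : 1 ≤ p) (hx : |x| ≤ 1 / 2)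
    (hδ : 0 < deltaNum p x (muCoeff n x)) : 0 < betaCoeff n p x := by
  have hp₀ : p ≠ 0 := by positivity
  rw [betaCoeff_eq_mul_gammaCoeff hn hp₀ hx hδ]
  exact mul_pos (betaGammaRatio_muCoeff_pos hn hp hx) (gammaCoeff_pos hn hp₀ hx hδ)

theorem betaCoeff_mul_sub_gammaCoeff_mul_pos {n p q x y : ℝ} (hn : 1 < n)
    (hp : p ≠ 0) (hx : |x| ≤ 1 / 2) (hδx : 0 < deltaNum p x (muCoeff n x))
    (hq : q ≠ 0) (hy : |y| ≤ 1 / 2) (hδy : 0 < deltaNum q y (muCoeff n y))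
    (hratio : 1 < betaGammaRatio p x (muCoeff n x) * betaGammaRatio q y (muCoeff n y)) :
    0 < betaCoeff n p x * betaCoeff n q y - gammaCoeff n p x * gammaCoeff n q y := by
  have hγ := mul_pos (gammaCoeff_pos hn hp hx hδx) (gammaCoeff_pos hn hq hy hδy)
  rw [betaCoeff_eq_mul_gammaCoeff hn hp hx hδx, betaCoeff_eq_mul_gammaCoeff hn hq hy hδy,
    mul_mul_mul_comm, ← sub_one_mul]
  exact mul_pos (sub_pos.mpr hratio) hγ

/-- The exponent `p` with `1 / (p + 1) = 1 / 2 - a`. -/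
noncomputable def criticalExponent (a : ℝ) : ℝ :=
  (1 + 2 * a) / (1 - 2 * a)

/-- The parameter `r` of the statement in the variables `a = d₁ / n` and `b = d₂ / n`. -/
noncomputable def rParam (a b : ℝ) : ℝ :=
  -3 * (a - b) / (1 - 2 * b)

/-- The parameter `s` of the statement in the variables `a = d₁ / n` and `b = d₂ / n`. -/
noncomputable def sParam (a b : ℝ) : ℝ :=
  (a - b) / (1 - 2 * a)

theorem eq_criticalExponent {a p : ℝ} (ha : a < 1 / 2) (h : 1 / (p + 1) = 1 / 2 - a) :
    p = criticalExponent a := by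
  have hp : p + 1 ≠ 0 := by
    intro hp
    rw [hp, div_zero] at h
    linarith
  rw [div_eq_iff hp] at h
  rw [criticalExponent, eq_div_iff (by linarith)]
  linarith

theorem one_le_criticalExponent {a : ℝ} (ha₀ : 0 ≤ a) (ha : a < 1 / 2) :
    1 ≤ criticalExponent a := by
  rw [criticalExponent, le_div_iff₀ (by linarith)]
  linarith

theorem rParam_div {n : ℝ} (d₁ d₂ : ℝ) (hn : n ≠ 0) :
    rParam (d₁ / n) (d₂ / n) = -3 * (d₁ - d₂) / (n - 2 * d₂) := by
  rw [rParam, ← mul_div_mul_left _ _ hn]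
  field_simp

theorem sParam_div {n : ℝ} (d₁ d₂ : ℝ) (hn : n ≠ 0) :
    sParam (d₁ / n) (d₂ / n) = (d₁ - d₂) / (n - 2 * d₁) := by
  rw [sParam, ← mul_div_mul_left _ _ hn]
  field_simp

theorem mul_le_of_sq_mul_le {n c : ℝ} (hn : 0 < n) (h : n ^ 2 * c ≤ 2 * (n - 2)) :
    n * c ≤ 2 := by
  have : n * (n * c) ≤ n * 2 := by linarith
  exact le_of_mul_le_mul_left this hn

theorem le_of_sq_mul_le {n c : ℝ} (hn : 12 ≤ n) (hc : 0 ≤ c) (h : n ^ 2 * c ≤ 2 * (n - 2)) :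
    c ≤ 1 / 6 := by
  have h₁ : 12 * c ≤ n * c := by gcongr
  have h₂ : n * c ≤ 2 := mul_le_of_sq_mul_le (by linarith) h
  linarith

theorem sq_mul_div_add_div_le {n d₁ d₂ : ℝ} (hn : 0 < n) (h : d₁ ≤ 2 - d₂ - 4 / n) :
    n ^ 2 * (d₁ / n + d₂ / n) ≤ 2 * (n - 2) :=
  calc n ^ 2 * (d₁ / n + d₂ / n) = n * (d₁ + d₂) := by field_simp
    _ ≤ n * (2 - 4 / n) := by gcongr; linarith
    _ = 2 * (n - 2) := by field_simp; ring

section SmallParameters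

variable {a b : ℝ}

theorem rParam_neg (hab : b < a) (hb : b < 1 / 2) : rParam a b < 0 :=
  div_neg_of_neg_of_pos (by linarith) (by linarith)

theorem sParam_pos (hab : b < a) (ha : a < 1 / 2) : 0 < sParam a b :=
  div_pos (by linarith) (by linarith)

theorem abs_rParam_le (hb : 0 ≤ b) (hab : b < a) (h : a + b ≤ 1 / 6) :
    |rParam a b| ≤ 1 / 2 := by
  have hden : 0 < 1 - 2 * b := by linarith
  rw [abs_of_neg (rParam_neg hab (by linarith)), rParam, ← neg_div, div_le_iff₀ hden]
  linarith

theorem abs_sParam_le (hb : 0 ≤ b) (hab : b < a) (h : a + b ≤ 1 / 6) :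
    |sParam a b| ≤ 1 / 2 := by
  have hden : 0 < 1 - 2 * a := by linarith
  rw [abs_of_pos (sParam_pos hab (by linarith)), sParam, div_le_iff₀ hden]
  linarith

theorem neg_six_le_mul_rParam {n : ℝ} (hn : 2 ≤ n) (hb : 0 ≤ b) (hb' : b < 1 / 2)
    (h : n * (a + b) ≤ 2) : -6 ≤ n * rParam a b := by
  have hnb : 2 * b ≤ n * b := by gcongr
  rw [rParam, mul_div_assoc', le_div_iff₀ (by linarith)]
  linarith

theorem mul_sParam_le_four {n : ℝ} (hn : 0 ≤ n) (hb : 0 ≤ b) (ha : a ≤ 1 / 4)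
    (h : n * (a + b) ≤ 2) : n * sParam a b ≤ 4 := by
  have hnb : 0 ≤ n * b := mul_nonneg hn hb
  rw [sParam, mul_div_assoc', div_le_iff₀ (by linarith)]
  linarith

theorem alphaCoeff_rParam_pos {n : ℝ} (hn : 12 ≤ n) (hb : 0 ≤ b) (hab : b < a)
    (h : n ^ 2 * (a + b) ≤ 2 * (n - 2)) : 0 < alphaCoeff n (rParam a b) := by
  have hsum : a + b ≤ 1 / 6 := le_of_sq_mul_le hn (by linarith) h
  have hr : rParam a b < 0 := rParam_neg hab (by linarith)
  have hlower : -6 ≤ n * rParam a b :=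
    neg_six_le_mul_rParam (by linarith) hb (by linarith) (mul_le_of_sq_mul_le (by linarith) h)
  have hupper : n * rParam a b ≤ 0 := mul_nonpos_of_nonneg_of_nonpos (by linarith) hr.le
  exact alphaCoeff_pos (by linarith) hr.ne (by nlinarith only [hn, hlower, hupper])

theorem alphaCoeff_sParam_pos {n : ℝ} (hn : 12 ≤ n) (hb : 0 ≤ b) (hab : b < a)
    (h : n ^ 2 * (a + b) ≤ 2 * (n - 2)) : 0 < alphaCoeff n (sParam a b) := by
  have hsum : a + b ≤ 1 / 6 := le_of_sq_mul_le hn (by linarith) h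
  have hs : 0 < sParam a b := sParam_pos hab (by linarith)
  have hlower : 0 ≤ n * sParam a b := mul_nonneg (by linarith) hs.le
  have hupper : n * sParam a b ≤ 4 :=
    mul_sParam_le_four (by linarith) hb (by linarith) (mul_le_of_sq_mul_le (by linarith) h)
  exact alphaCoeff_pos (by linarith) hs.ne' (by nlinarith only [hn, hlower, hupper])

end SmallParameters

/-- The numerator of `μ(t / w)` over the denominator `((n - 1) w)²`. -/
noncomputable def muNum (n t w : ℝ) : ℝ :=
  n * (n + 2) * w ^ 2 + (n ^ 2 - 3 * n - 1) * t * w - n * (n + 2) / 4 * t ^ 2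

theorem muCoeff_div {w : ℝ} (n t : ℝ) (hw : w ≠ 0) :
    muCoeff n (t / w) = muNum n t w / ((n - 1) ^ 2 * w ^ 2) := by
  unfold muCoeff muNum
  field_simp

theorem muNum_pos {n t w : ℝ} (hn : 1 < n) (hw : w ≠ 0) (h : |t / w| ≤ 1 / 2) :
    0 < muNum n t w := by
  have hμ := muCoeff_pos hn h
  rw [muCoeff_div n t hw] at hμ
  have hden : 0 < (n - 1) ^ 2 * w ^ 2 := mul_pos (pow_pos (sub_pos.mpr hn) 2) (by positivity)
  exact (div_pos_iff_of_pos_right hden).mp hμ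

theorem deltaNum_div {c w z : ℝ} (P t M : ℝ) (hc : c ≠ 0) (hw : w ≠ 0) (hz : z ≠ 0) :
    deltaNum (P / z) (t / w) (M / (c ^ 2 * w ^ 2)) =
      ((P - z) * M ^ 2 + c ^ 4 * (t * w ^ 2 * (P * w + t * z))) / (c ^ 4 * w ^ 4 * z) := by
  unfold deltaNum
  field_simp

theorem betaGammaRatio_div {c w z : ℝ} (P t M : ℝ) (hc : c ≠ 0) (hw : w ≠ 0) (hz : z ≠ 0) :
    betaGammaRatio (P / z) (t / w) (M / (c ^ 2 * w ^ 2)) =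
      z * ((M - t * w * c ^ 2) * ((P - z) * M + c ^ 2 * (w * (P * w + t * z)))) /
        (c ^ 2 * w ^ 2 * (P ^ 2 * M)) := by
  unfold betaGammaRatio
  field_simp
  ring

/-- On the face `n² c = 2 (n - 2)`, the number `1 + 2 x` times `2 (n - 2)`, made homogeneous
in `c` and `x`. -/
def faceAdd (n c x : ℝ) : ℝ :=
  n ^ 2 * c + 4 * (n - 2) * x

/-- On the face `n² c = 2 (n - 2)`, the number `1 - 2 x` times `2 (n - 2)`, made homogeneous
in `c` and `x`. -/
def faceSub (n c x : ℝ) : ℝ :=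
  n ^ 2 * c - 4 * (n - 2) * x

section Face

variable {n c x : ℝ}

theorem faceAdd_eq (h : n ^ 2 * c = 2 * (n - 2)) :
    faceAdd n c x = 2 * (n - 2) * (1 + 2 * x) := by
  rw [faceAdd, h]
  ring

theorem faceSub_eq (h : n ^ 2 * c = 2 * (n - 2)) :
    faceSub n c x = 2 * (n - 2) * (1 - 2 * x) := by
  rw [faceSub, h]
  ring

theorem div_one_sub_eq_div_faceSub (t : ℝ) (hn : n - 2 ≠ 0) (h : n ^ 2 * c = 2 * (n - 2)) :
    t / (1 - 2 * x) = 2 * (n - 2) * t / faceSub n c x := by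
  rw [faceSub_eq h, mul_div_mul_left _ _ (mul_ne_zero two_ne_zero hn)]

theorem criticalExponent_eq_div (hn : n - 2 ≠ 0) (h : n ^ 2 * c = 2 * (n - 2)) :
    criticalExponent x = faceAdd n c x / faceSub n c x := by
  rw [criticalExponent, div_one_sub_eq_div_faceSub _ hn h, faceAdd_eq h]

theorem faceAdd_pos (hn : 2 < n) (hx : 0 ≤ x) (h : n ^ 2 * c = 2 * (n - 2)) :
    0 < faceAdd n c x := by
  rw [faceAdd_eq h]
  exact mul_pos (by linarith) (by linarith)

theorem faceSub_pos (hn : 2 < n) (hx : x < 1 / 2) (h : n ^ 2 * c = 2 * (n - 2)) :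
    0 < faceSub n c x := by
  rw [faceSub_eq h]
  exact mul_pos (by linarith) (by linarith)

end Face

theorem face_deltaNum_polynomial_pos {n a b w₁ w₂ P t : ℝ} (hn : 12 ≤ n) (hb : 0 ≤ b)
    (hab : b < a) (hw₁ : w₁ = faceSub n (a + b) a) (hw₂ : w₂ = faceSub n (a + b) b)
    (hP : P = faceAdd n (a + b) a) (ht : t = 2 * (n - 2) * (-3 * (a - b))) :
    0 < (P - w₁) * muNum n t w₂ ^ 2 + (n - 1) ^ 4 * (t * w₂ ^ 2 * (P * w₂ + t * w₁)) := by
  obtain ⟨m, rfl⟩ : ∃ m, n = m + 12 := ⟨n - 12, by ring⟩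
  obtain ⟨y, rfl⟩ : ∃ y, a = b + y := ⟨a - b, by ring⟩
  have hm : 0 ≤ m := by linarith
  have hy : 0 < y := by linarith
  subst hw₁ hw₂ hP ht
  unfold muNum faceAdd faceSub
  ring_nf
  positivity

set_option maxRecDepth 2000 in
set_option maxHeartbeats 2000000 in
-- The expansion in `n - 12`, `b` and `a - b` has 286 monomials.
theorem face_ratio_polynomial_lt {n a b w₁ w₂ P Q t₁ t₂ M₁ M₂ : ℝ} (hn : 12 ≤ n) (hb : 0 ≤ b)
    (hab : b < a) (hw₁ : w₁ = faceSub n (a + b) a) (hw₂ : w₂ = faceSub n (a + b) b)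
    (hP : P = faceAdd n (a + b) a) (hQ : Q = faceAdd n (a + b) b)
    (ht₁ : t₁ = 2 * (n - 2) * (-3 * (a - b))) (ht₂ : t₂ = 2 * (n - 2) * (a - b))
    (hM₁ : M₁ = muNum n t₁ w₂) (hM₂ : M₂ = muNum n t₂ w₁) :
    (n - 1) ^ 4 * w₁ * w₂ * (P ^ 2 * M₁) * (Q ^ 2 * M₂) <
      ((M₁ - t₁ * w₂ * (n - 1) ^ 2) *
        ((P - w₁) * M₁ + (n - 1) ^ 2 * (w₂ * (P * w₂ + t₁ * w₁)))) *
      ((M₂ - t₂ * w₁ * (n - 1) ^ 2) *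
        ((Q - w₂) * M₂ + (n - 1) ^ 2 * (w₁ * (Q * w₁ + t₂ * w₂)))) := by
  obtain ⟨m, rfl⟩ : ∃ m, n = m + 12 := ⟨n - 12, by ring⟩
  obtain ⟨y, rfl⟩ : ∃ y, a = b + y := ⟨a - b, by ring⟩
  have hm : 0 ≤ m := by linarith
  have hy : 0 < y := by linarith
  subst hM₁ hM₂ hw₁ hw₂ hP hQ ht₁ ht₂
  rw [← sub_pos]
  unfold muNum faceAdd faceSub
  ring_nf
  positivity

theorem deltaNum_rParam_pos_of_face {n a b : ℝ} (hn : 12 ≤ n) (hb : 0 ≤ b) (hab : b < a)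
    (h : n ^ 2 * (a + b) = 2 * (n - 2)) :
    0 < deltaNum (criticalExponent a) (rParam a b) (muCoeff n (rParam a b)) := by
  have hsum : a + b ≤ 1 / 6 := le_of_sq_mul_le hn (by linarith) h.le
  have hn₁ : 0 < n - 1 := by linarith
  have hn₂ : 0 < n - 2 := by linarith
  have hw₁ : 0 < faceSub n (a + b) a := faceSub_pos (by linarith) (by linarith) h
  have hw₂ : 0 < faceSub n (a + b) b := faceSub_pos (by linarith) (by linarith) h
  rw [rParam, div_one_sub_eq_div_faceSub _ hn₂.ne' h, criticalExponent_eq_div hn₂.ne' h,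
    muCoeff_div _ _ hw₂.ne', deltaNum_div _ _ _ hn₁.ne' hw₂.ne' hw₁.ne']
  exact div_pos (face_deltaNum_polynomial_pos hn hb hab rfl rfl rfl rfl) (by positivity)

theorem one_lt_div_mul_div {c w z A B X Y : ℝ} (hc : 0 < c) (hw : 0 < w) (hz : 0 < z)
    (hX : 0 < X) (hY : 0 < Y) (h : c ^ 4 * z * w * X * Y < A * B) :
    1 < z * A / (c ^ 2 * w ^ 2 * X) * (w * B / (c ^ 2 * z ^ 2 * Y)) := by
  rw [div_mul_div_comm, one_lt_div (by positivity)]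
  linear_combination z * w * h

theorem one_lt_betaGammaRatio_mul_of_face {n a b : ℝ} (hn : 12 ≤ n) (hb : 0 ≤ b) (hab : b < a)
    (h : n ^ 2 * (a + b) = 2 * (n - 2)) :
    1 < betaGammaRatio (criticalExponent a) (rParam a b) (muCoeff n (rParam a b)) *
      betaGammaRatio (criticalExponent b) (sParam a b) (muCoeff n (sParam a b)) := by
  have hsum : a + b ≤ 1 / 6 := le_of_sq_mul_le hn (by linarith) h.le
  have hn₁ : 0 < n - 1 := by linarith
  have hn₂ : 0 < n - 2 := by linarith
  have hw₁ : 0 < faceSub n (a + b) a := faceSub_pos (by linarith) (by linarith) h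
  have hw₂ : 0 < faceSub n (a + b) b := faceSub_pos (by linarith) (by linarith) h
  have hP : 0 < faceAdd n (a + b) a := faceAdd_pos (by linarith) (by linarith) h
  have hQ : 0 < faceAdd n (a + b) b := faceAdd_pos (by linarith) hb h
  have hr := div_one_sub_eq_div_faceSub (x := b) (-3 * (a - b)) hn₂.ne' h
  have hs := div_one_sub_eq_div_faceSub (x := a) (a - b) hn₂.ne' h
  rw [← rParam] at hr
  rw [← sParam] at hs
  have hM₁ := muNum_pos (sub_pos.mp hn₁) hw₂.ne' (hr ▸ abs_rParam_le hb hab hsum)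
  have hM₂ := muNum_pos (sub_pos.mp hn₁) hw₁.ne' (hs ▸ abs_sParam_le hb hab hsum)
  have hpoly := face_ratio_polynomial_lt hn hb hab rfl rfl rfl rfl rfl rfl rfl rfl
  rw [hr, hs, criticalExponent_eq_div hn₂.ne' h, criticalExponent_eq_div hn₂.ne' h,
    muCoeff_div _ _ hw₂.ne', muCoeff_div _ _ hw₁.ne',
    betaGammaRatio_div _ _ _ hn₁.ne' hw₂.ne' hw₁.ne',
    betaGammaRatio_div _ _ _ hn₁.ne' hw₁.ne' hw₂.ne']
  exact one_lt_div_mul_div hn₁ hw₂ hw₁ (by positivity) (by positivity) hpoly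

theorem exists_ge_sq_mul_eq {n c : ℝ} (hn : 0 < n) (hc : 0 < c) (h : n ^ 2 * c ≤ 2 * (n - 2)) :
    ∃ ν, n ≤ ν ∧ ν ^ 2 * c = 2 * (ν - 2) := by
  have hle : n ≤ 2 / c := by
    rw [le_div_iff₀ hc]
    exact mul_le_of_sq_mul_le hn h
  have hcont : ContinuousOn (fun ν : ℝ => ν ^ 2 * c - 2 * (ν - 2)) (Set.Icc n (2 / c)) := by
    fun_prop
  have hend : (2 / c) ^ 2 * c - 2 * (2 / c - 2) = 4 := by
    field_simp
    ring
  obtain ⟨ν, hν, hroot⟩ := intermediate_value_Icc hle hcont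
    (show (0 : ℝ) ∈ _ from ⟨by linarith, by linarith⟩)
  exact ⟨ν, hν.1, sub_eq_zero.mp hroot⟩

theorem deltaNum_rParam_pos {n a b : ℝ} (hn : 12 ≤ n) (hb : 0 ≤ b) (hab : b < a)
    (h : n ^ 2 * (a + b) ≤ 2 * (n - 2)) :
    0 < deltaNum (criticalExponent a) (rParam a b) (muCoeff n (rParam a b)) := by
  have hsum : a + b ≤ 1 / 6 := le_of_sq_mul_le hn (by linarith) h
  have hr := abs_rParam_le hb hab hsum
  obtain ⟨ν, hnν, hν⟩ := exists_ge_sq_mul_eq (by linarith) (by linarith) h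
  exact (deltaNum_rParam_pos_of_face (hn.trans hnν) hb hab hν).trans_le <|
    deltaNum_mono (one_le_criticalExponent (by linarith) (by linarith))
      (muCoeff_pos (by linarith) hr).le (muCoeff_anti (by linarith) hnν hr)

theorem deltaNum_pos {p x u : ℝ} (hp : 1 ≤ p) (hx : 0 < x) : 0 < deltaNum p x u := by
  have : 0 ≤ p - 1 := sub_nonneg.mpr hp
  unfold deltaNum
  positivity

theorem one_lt_betaGammaRatio_mul {n a b : ℝ} (hn : 12 ≤ n) (hb : 0 ≤ b) (hab : b < a)
    (h : n ^ 2 * (a + b) ≤ 2 * (n - 2)) :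
    1 < betaGammaRatio (criticalExponent a) (rParam a b) (muCoeff n (rParam a b)) *
      betaGammaRatio (criticalExponent b) (sParam a b) (muCoeff n (sParam a b)) := by
  have hsum : a + b ≤ 1 / 6 := le_of_sq_mul_le hn (by linarith) h
  have hr := abs_rParam_le hb hab hsum
  have hs := abs_sParam_le hb hab hsum
  have hs₀ := sParam_pos hab (by linarith : a < 1 / 2)
  have hp : 1 ≤ criticalExponent a := one_le_criticalExponent (by linarith) (by linarith)
  have hq : 1 ≤ criticalExponent b := one_le_criticalExponent hb (by linarith)
  obtain ⟨ν, hnν, hν⟩ := exists_ge_sq_mul_eq (by linarith) (by linarith) h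
  have hν₁ : 1 < ν := by linarith
  have hδr := deltaNum_rParam_pos (hn.trans hnν) hb hab hν.le
  have hratio_r := betaGammaRatio_mono hp (muCoeff_pos hν₁ hr)
    (muCoeff_anti (by linarith) hnν hr) hδr.le
  have hratio_s := betaGammaRatio_mono hq (muCoeff_pos hν₁ hs)
    (muCoeff_anti (by linarith) hnν hs) (deltaNum_pos hq hs₀).le
  exact (one_lt_betaGammaRatio_mul_of_face (hn.trans hnν) hb hab hν).trans_le <|
    mul_le_mul hratio_r hratio_s
      (betaGammaRatio_muCoeff_pos hν₁ hq hs).le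
      (betaGammaRatio_muCoeff_pos (by linarith) hp hr).le

theorem positivity_condition_c0_four_general {n d₁ d₂ p q r s : ℝ} (hn : 12 ≤ n)
    (hd₂ : 0 ≤ d₂) (hd : d₂ < d₁) (hsum : d₁ ≤ 2 - d₂ - 4 / n)
    (hp : 1 / (p + 1) = 1 / 2 - d₁ / n) (hq : 1 / (q + 1) = 1 / 2 - d₂ / n)
    (hr : r = -3 * (d₁ - d₂) / (n - 2 * d₂)) (hs : s = (d₁ - d₂) / (n - 2 * d₁)) :
    0 < alphaCoeff n r ∧ 0 < alphaCoeff n s ∧ 0 < betaCoeff n p r ∧ 0 < betaCoeff n q s ∧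
      0 < gammaCoeff n p r ∧ 0 < gammaCoeff n q s ∧
      0 < betaCoeff n p r * betaCoeff n q s - gammaCoeff n p r * gammaCoeff n q s := by
  have hn₀ : 0 < n := by linarith
  have hn₁ : 1 < n := by linarith
  have hb : 0 ≤ d₂ / n := by positivity
  have hab : d₂ / n < d₁ / n := by gcongr
  have hface : n ^ 2 * (d₁ / n + d₂ / n) ≤ 2 * (n - 2) := sq_mul_div_add_div_le hn₀ hsum
  have hsmall := le_of_sq_mul_le hn (by linarith) hface
  rw [← rParam_div d₁ d₂ hn₀.ne'] at hr
  rw [← sParam_div d₁ d₂ hn₀.ne'] at hs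
  obtain rfl := eq_criticalExponent (by linarith) hp
  obtain rfl := eq_criticalExponent (by linarith) hq
  set a := d₁ / n
  set b := d₂ / n
  subst hr hs
  have hp := one_le_criticalExponent (a := a) (by linarith) (by linarith)
  have hq := one_le_criticalExponent hb (by linarith)
  have hr := abs_rParam_le hb hab hsmall
  have hs := abs_sParam_le hb hab hsmall
  have hδr := deltaNum_rParam_pos hn hb hab hface
  have hδs : 0 < deltaNum (criticalExponent b) (sParam a b) (muCoeff n (sParam a b)) :=
    deltaNum_pos hq (sParam_pos hab (by linarith))
  exact ⟨alphaCoeff_rParam_pos hn hb hab hface, alphaCoeff_sParam_pos hn hb hab hface,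
    betaCoeff_pos hn₁ hp hr hδr, betaCoeff_pos hn₁ hq hs hδs,
    gammaCoeff_pos hn₁ (by positivity) hr hδr, gammaCoeff_pos hn₁ (by positivity) hs hδs,
    betaCoeff_mul_sub_gammaCoeff_mul_pos hn₁ (by positivity) hr hδr (by positivity) hs hδs
      (one_lt_betaGammaRatio_mul hn hb hab hface)⟩

theorem positivity_condition_c0_four (n : ℕ) (hn : 13 ≤ n) :
    ∀ d₁ d₂ : ℝ, 0 ≤ d₂ → d₂ < d₁ → d₁ ≤ 2 - d₂ - 4 / (n : ℝ) →
    ∀ p q r s k₁ k₂ μr μs θ₁ θ₂ δ₁ δ₂ α₁ α₂ β₁ β₂ γ₁ γ₂ : ℝ,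
      1 / (p + 1) = 1 / 2 - d₁ / (n : ℝ) →
      1 / (q + 1) = 1 / 2 - d₂ / (n : ℝ) →
      r = -3 * (d₁ - d₂) / ((n : ℝ) - 2 * d₂) →
      s = (d₁ - d₂) / ((n : ℝ) - 2 * d₁) →
      k₁ = (n : ℝ) / (2 * ((n : ℝ) - 1)) * (r - 2 + r / (n : ℝ) + r ^ 2 / 2) →
      k₂ = (n : ℝ) / (2 * ((n : ℝ) - 1)) * (s - 2 + s / (n : ℝ) + s ^ 2 / 2) →
      μr = (((n : ℝ) + 2) * (n : ℝ) + ((n : ℝ) ^ 2 - 3 * (n : ℝ) - 1) * r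
          - ((n : ℝ) * ((n : ℝ) + 2) / 4) * r ^ 2) / ((n : ℝ) - 1) ^ 2 →
      μs = (((n : ℝ) + 2) * (n : ℝ) + ((n : ℝ) ^ 2 - 3 * (n : ℝ) - 1) * s
          - ((n : ℝ) * ((n : ℝ) + 2) / 4) * s ^ 2) / ((n : ℝ) - 1) ^ 2 →
      θ₁ = (μr - r) / p →
      θ₂ = (μs - s) / q →
      δ₁ = (r + θ₁ * p) * (r + θ₁ * (p - 2) + 1) + θ₁ * (θ₁ - 1) * p →
      δ₂ = (s + θ₂ * q) * (s + θ₂ * (q - 2) + 1) + θ₂ * (θ₂ - 1) * q →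
      α₁ = -(((n : ℝ) - 1) / n) * k₁ ^ 2 + k₁ * (r - 1) - r * (r - 1) / 2 →
      α₂ = -(((n : ℝ) - 1) / n) * k₂ ^ 2 + k₂ * (s - 1) - s * (s - 1) / 2 →
      β₁ = ((3 / 2) * r - ((n : ℝ) + 2) / n * k₁) *
          (2 * θ₁ * (p - 1) + r + 1) / δ₁ - ((n : ℝ) - 1) / n →
      β₂ = ((3 / 2) * s - ((n : ℝ) + 2) / n * k₂) *
          (2 * θ₂ * (q - 1) + s + 1) / δ₂ - ((n : ℝ) - 1) / n →
      γ₁ = ((3 / 2) * r - ((n : ℝ) + 2) / n * k₁) * p / δ₁ →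
      γ₂ = ((3 / 2) * s - ((n : ℝ) + 2) / n * k₂) * q / δ₂ →
      0 < α₁ ∧ 0 < α₂ ∧ 0 < β₁ ∧ 0 < β₂ ∧ 0 < γ₁ ∧ 0 < γ₂ ∧
        0 < β₁ * β₂ - γ₁ * γ₂ := by
  rintro d₁ d₂ hd₂ hd hsum p q _ _ _ _ _ _ _ _ _ _ _ _ _ _ _ _ hp hq rfl rfl rfl rfl rfl rfl
    rfl rfl rfl rfl rfl rfl rfl rfl rfl rfl
  have hn' : (12 : ℝ) ≤ n := by exact_mod_cast (by lia : 12 ≤ n)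
  exact positivity_condition_c0_four_general hn' hd₂ hd hsum hp hq rfl rfl
end

section
/- For every integer n with 5 ≤ n ≤ 12 and all real d₁, d₂ with 0 ≤ d₂ < d₁ < 2 − d₂ − 4/n, there exists ε₀ > 0 such that the following holds. Define p, q by 1/(p+1) = 1/2 − d₁/n and 1/(q+1) = 1/2 − d₂/n; choose r = −3(d₁−d₂)/(n−2d₂), s = (d₁−d₂)/(n−2d₁), k₁ = (n/(2(n−1)))(r − 1 − √((1−r)((n−2)r+n)/n)) + ε₀, k₂ = (n/(2(n−1)))(s − 1 − √((1−s)((n−2)s+n)/n)) + ε₀, ρ₁ = (n/(n−1))((3/2)r − ((n+2)/n)k₁), ρ₂ = (n/(n−1))((3/2)s − ((n+2)/n)k₂), θ₁ = (ρ₁ − r)/p, θ₂ = (ρ₂ − s)/q; and define δ₁ = (r + θ₁p)(r + θ₁(p−2) + 1) + θ₁(θ₁−1)p, δ₂ = (s + θ₂q)(s + θ₂(q−2) + 1) + θ₂(θ₂−1)q, α₁ = −((n−1)/n)k₁² + k₁(r−1) − r(r−1)/2, α₂ = −((n−1)/n)k₂² + k₂(s−1) − s(s−1)/2, β₁ = ((3/2)r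 − ((n+2)/n)k₁)(2θ₁(p−1) + r + 1)/δ₁ − (n−1)/n, β₂ = ((3/2)s − ((n+2)/n)k₂)(2θ₂(q−1) + s + 1)/δ₂ − (n−1)/n, γ₁ = ((3/2)r − ((n+2)/n)k₁)·p/δ₁, γ₂ = ((3/2)s − ((n+2)/n)k₂)·q/δ₂. Then α₁ > 0, α₂ > 0, β₁ > 0, β₂ > 0, γ₁ > 0, γ₂ > 0 and β₁β₂ − γ₁γ₂ > 0. -/
open MeasureTheory Real
open scoped InnerProductSpace

open scoped Topology

/-!
Write `x = 2 (d₁ - d₂) / (N - 2 d₂)` and `c = 1 / (q + 1)`, so that `1 / (p + 1) = (1 - x) c`,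
`r = -3 x / 2` and `s = x / (2 (1 - x))`. Each `α` vanishes at `ε₀ = 0` and increases for small
`ε₀`, and `β₁ β₂ - γ₁ γ₂ > 0` says that the product of the two ratios `β / γ` exceeds `1`. For
fixed `x`, these ratios increase with `ρ`, so `ρ` may be replaced by a rational lower bound coming
from `√((1 - r) ((N - 2) r + N) / N) ≥ 1 + μ r` with a suitable slope `μ`. The product is then
log-concave in `c`, so it suffices to bound it at the two ends `(N² - 2 N + 4) / (N² (2 - x))` and
`1 / 2` of the admissible range of `c`. There the claim is a polynomial inequality in `N` and `x`.
All conditions are open in `ε₀`, so they persist for small `ε₀ > 0`.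
-/

/-- The ratio `β / γ` of the coefficients attached to a pair `(ρ, r)`, as a function of `u = 1 / p`
(see `coefficients_pos`). -/
noncomputable def ratio (ρ r u : ℝ) : ℝ :=
  u * (ρ - r) * (ρ + 1 - u * (ρ - r)) / ρ

/-- The quantity `δ` rewritten in terms of `ρ`, `r` and `u = 1 / p` (see `coefficients_pos`). -/
def delta (ρ r u : ℝ) : ℝ :=
  (1 - u) * ρ ^ 2 + r + u * r ^ 2

/-- The value of `ρ` corresponding to `k = k(r) + ε`, where `k(r)` is the smaller root of the
quadratic polynomial `α` in `k`. -/
noncomputable def rho (N r ε : ℝ) : ℝ :=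
  N / (N - 1) * (3 / 2 * r - (N + 2) / N *
    (N / (2 * (N - 1)) * (r - 1 - √((1 - r) * ((N - 2) * r + N) / N)) + ε))

/-- A rational lower bound for `rho N (-3 / 2 * x) 0`. -/
noncomputable def lowerFst (N x : ℝ) : ℝ :=
  (2 * N * (N + 2) - 3 / 2 * (2 * N ^ 2 - 3 * N - 8) * x) / (2 * (N - 1) ^ 2)

/-- `lowerSnd N x / (1 - x)` is a rational lower bound for `rho N (x / (2 * (1 - x))) 0`. -/
noncomputable def lowerSnd (N x : ℝ) : ℝ :=
  (2 * N * (N + 2) * (1 - x) + (N - 4) * (2 * N + 1) / 2 * x) / (2 * (N - 1) ^ 2)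

/-- The conditions on the shift `ε` of `k` under which the coefficients `α`, `β` and `γ` attached to
`r` and `u = 1 / p` are positive (see `coefficients_pos`). -/
structure IsSmallShift (N r u ε : ℝ) : Prop where
  pos : 0 < ε
  lt_sqrt : (N - 1) / N * ε < √((1 - r) * ((N - 2) * r + N) / N)
  rho_pos : 0 < rho N r ε
  lt_rho : r < rho N r ε
  delta_pos : 0 < delta (rho N r ε) r u

section LogConcavity

lemma concaveOn_log_sub_log_one_sub :
    ConcaveOn ℝ (Set.Ioc (0 : ℝ) (1 / 2)) fun c => log c - log (1 - c) := by
  have hderiv : ∀ c ∈ Set.Ioo (0 : ℝ) (1 / 2),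
      HasDerivAt (fun c => log c - log (1 - c)) (1 / (c * (1 - c))) c := by
    rintro c ⟨hc0, hc⟩
    have hc1 : 1 - c ≠ 0 := by linarith
    refine ((hasDerivAt_log hc0.ne').sub
      (((hasDerivAt_id c).const_sub 1).log hc1)).congr_deriv ?_
    rw [id_eq]
    field_simp
    ring
  apply AntitoneOn.concaveOn_of_deriv (convex_Ioc _ _)
  · refine (continuousOn_log.mono fun c hc => hc.1.ne').sub (ContinuousOn.log (by fun_prop) ?_)
    intro c hc
    linarith [hc.2]
  · rw [interior_Ioc]
    exact fun c hc => (hderiv c hc).differentiableAt.differentiableWithinAt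
  · rw [interior_Ioc]
    intro c hc e he hce
    rw [(hderiv c hc).deriv, (hderiv e he).deriv]
    apply one_div_le_one_div_of_le
    · nlinarith [hc.1, hc.2]
    · nlinarith [hc.1, hc.2, he.1, he.2]

lemma convexOn_div_one_sub : ConvexOn ℝ (Set.Iio 1) fun c : ℝ => c / (1 - c) := by
  refine ⟨convex_Iio 1, fun a ha b hb w v hw hv hwv => ?_⟩
  have hm := convex_Iio 1 ha hb hw hv hwv
  simp only [smul_eq_mul, Set.mem_Iio] at ha hb hm ⊢
  obtain rfl : w = 1 - v := by linarith
  have : 0 < 1 - a := by linarith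
  have : 0 < 1 - b := by linarith
  have : 0 < 1 - ((1 - v) * a + v * b) := by linarith
  have hgap : (1 - v) * (a / (1 - a)) + v * (b / (1 - b)) -
      ((1 - v) * a + v * b) / (1 - ((1 - v) * a + v * b)) =
      (1 - v) * v * (a - b) ^ 2 / ((1 - a) * (1 - b) * (1 - ((1 - v) * a + v * b))) := by
    field_simp
    ring
  rw [← sub_nonneg, hgap]
  positivity

lemma concaveOn_log_comp {E : Type*} [AddCommMonoid E] [SMul ℝ E] {A : Set E} {f : E → ℝ}
    (hf : ConcaveOn ℝ A f) (hpos : ∀ a ∈ A, 0 < f a) : ConcaveOn ℝ A fun a => log (f a) :=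
  ⟨hf.1, fun a ha b hb _ _ hw hv hwv =>
    (strictConcaveOn_log_Ioi.concaveOn.2 (hpos a ha) (hpos b hb) hw hv hwv).trans <|
      log_le_log (convex_Ioi (0 : ℝ) (hpos a ha) (hpos b hb) hw hv hwv) (hf.2 ha hb hw hv hwv)⟩

lemma div_one_sub_mem_Ioc {c : ℝ} (hc : c ∈ Set.Ioc (0 : ℝ) (1 / 2)) :
    c / (1 - c) ∈ Set.Ioc (0 : ℝ) 1 := by
  obtain ⟨hc0, hc1⟩ := hc
  have : 0 < 1 - c := by linarith
  exact ⟨by positivity, by rw [div_le_one this]; linarith⟩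

lemma add_one_sub_mul_pos {ρ r u : ℝ} (hr : -1 < r) (hrρ : r < ρ) (hu : u ≤ 1) :
    0 < ρ + 1 - u * (ρ - r) := by
  nlinarith

lemma ratio_pos {ρ r u : ℝ} (hr : -1 < r) (hρ : 0 < ρ) (hrρ : r < ρ)
    (hu : u ∈ Set.Ioc (0 : ℝ) 1) : 0 < ratio ρ r u :=
  div_pos (mul_pos (mul_pos hu.1 (sub_pos.2 hrρ)) (add_one_sub_mul_pos hr hrρ hu.2)) hρ

lemma concaveOn_log_ratio {ρ r : ℝ} (hr : -1 < r) (hρ : 0 < ρ) (hrρ : r < ρ) :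
    ConcaveOn ℝ (Set.Ioc (0 : ℝ) (1 / 2)) fun c => log (ratio ρ r (c / (1 - c))) := by
  have hfactor : ConcaveOn ℝ (Set.Ioc (0 : ℝ) (1 / 2))
      fun c => log (ρ + 1 - (ρ - r) * (c / (1 - c))) := by
    refine concaveOn_log_comp ?_ fun c hc => ?_
    · have hodds := convexOn_div_one_sub.subset (s := Set.Ioc 0 (1 / 2))
        (fun c hc => hc.2.trans_lt (by norm_num)) (convex_Ioc _ _)
      exact (concaveOn_const (ρ + 1) (convex_Ioc _ _)).sub (hodds.smul (sub_pos.2 hrρ).le)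
    · rw [mul_comm]
      exact add_one_sub_mul_pos hr hrρ (div_one_sub_mem_Ioc hc).2
  refine ((concaveOn_log_sub_log_one_sub.add hfactor).add_const (log ((ρ - r) / ρ))).congr ?_
  intro c hc
  have hodds := div_one_sub_mem_Ioc hc
  have hc1 : 1 - c ≠ 0 := by linarith [hc.2]
  have hfac := add_one_sub_mul_pos hr hrρ hodds.2
  have hsplit : ratio ρ r (c / (1 - c)) =
      c / (1 - c) * (ρ + 1 - (ρ - r) * (c / (1 - c))) * ((ρ - r) / ρ) := by
    rw [ratio]
    ring
  rw [mul_comm (c / (1 - c))] at hfac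
  simp only [Pi.add_apply]
  rw [hsplit, log_mul (mul_pos hodds.1 hfac).ne' (div_pos (sub_pos.2 hrρ) hρ).ne',
    log_mul hodds.1.ne' hfac.ne', log_div hc.1.ne' hc1]

lemma one_lt_ratio_mul_ratio_of_endpoints {ρ r σ s t c₀ c c₁ : ℝ} (hr : -1 < r) (hρ : 0 < ρ)
    (hrρ : r < ρ) (hs : -1 < s) (hσ : 0 < σ) (hsσ : s < σ) (ht : t ∈ Set.Ioc (0 : ℝ) 1)
    (hc₀ : 0 < c₀) (hc₁ : c₁ ≤ 1 / 2) (hc : c ∈ Set.Icc c₀ c₁)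
    (h₀ : 1 < ratio ρ r (t * c₀ / (1 - t * c₀)) * ratio σ s (c₀ / (1 - c₀)))
    (h₁ : 1 < ratio ρ r (t * c₁ / (1 - t * c₁)) * ratio σ s (c₁ / (1 - c₁))) :
    1 < ratio ρ r (t * c / (1 - t * c)) * ratio σ s (c / (1 - c)) := by
  have hmem : ∀ z ∈ Set.Icc c₀ c₁, z ∈ Set.Ioc (0 : ℝ) (1 / 2) := fun z hz =>
    ⟨hc₀.trans_le hz.1, hz.2.trans hc₁⟩
  have hmem' : ∀ z ∈ Set.Icc c₀ c₁, t * z ∈ Set.Ioc (0 : ℝ) (1 / 2) := fun z hz =>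
    ⟨mul_pos ht.1 (hmem z hz).1, (mul_le_of_le_one_left (hmem z hz).1.le ht.2).trans (hmem z hz).2⟩
  have hpos₁ : ∀ z ∈ Set.Icc c₀ c₁, 0 < ratio ρ r (t * z / (1 - t * z)) := fun z hz =>
    ratio_pos hr hρ hrρ (div_one_sub_mem_Ioc (hmem' z hz))
  have hpos₂ : ∀ z ∈ Set.Icc c₀ c₁, 0 < ratio σ s (z / (1 - z)) := fun z hz =>
    ratio_pos hs hσ hsσ (div_one_sub_mem_Ioc (hmem z hz))
  have hconc : ConcaveOn ℝ (Set.Icc c₀ c₁) fun z =>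
      log (ratio ρ r (t * z / (1 - t * z)) * ratio σ s (z / (1 - z))) := by
    refine ((((concaveOn_log_ratio hr hρ hrρ).comp_linearMap (LinearMap.mulLeft ℝ t)).subset
      hmem' (convex_Icc _ _)).add
      ((concaveOn_log_ratio hs hσ hsσ).subset hmem (convex_Icc _ _))).congr fun z hz => ?_
    exact (log_mul (hpos₁ z hz).ne' (hpos₂ z hz).ne').symm
  have hle : c₀ ≤ c₁ := hc.1.trans hc.2
  rw [← log_pos_iff (mul_pos (hpos₁ c hc) (hpos₂ c hc)).le]
  exact (lt_min (log_pos h₀) (log_pos h₁)).trans_le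
    (hconc.min_le_of_mem_Icc (Set.left_mem_Icc.2 hle) (Set.right_mem_Icc.2 hle) hc)

end LogConcavity

section Monotonicity

lemma delta_mono {L ρ r u : ℝ} (hL : 0 < L) (hLρ : L ≤ ρ) (hu : u ≤ 1) :
    delta L r u ≤ delta ρ r u := by
  unfold delta
  gcongr

lemma ratio_mono {L ρ r u : ℝ} (hL : 0 < L) (hLρ : L ≤ ρ) (hu0 : 0 ≤ u) (hu1 : u ≤ 1)
    (hδ : 0 ≤ delta L r u) : ratio L r u ≤ ratio ρ r u := by
  have hρ : 0 < ρ := hL.trans_le hLρ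
  have hmul : L ^ 2 * (1 - u) ≤ ρ * L * (1 - u) := by
    rw [sq]
    gcongr
  have hgap : ratio ρ r u - ratio L r u =
      u * (ρ - L) * (ρ * L * (1 - u) + r + u * r ^ 2) / (ρ * L) := by
    rw [ratio, ratio]
    field_simp
    ring
  rw [← sub_nonneg, hgap]
  have : 0 ≤ ρ * L * (1 - u) + r + u * r ^ 2 := by
    rw [delta] at hδ
    linarith
  have := sub_nonneg.2 hLρ
  positivity

end Monotonicity

section ChordBounds

lemma one_add_mul_le_sqrt {N r μ : ℝ} (hN : N ≠ 0)
    (h : r * (2 * μ + 2 / N + r * (μ ^ 2 + 1 - 2 / N)) ≤ 0) :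
    1 + μ * r ≤ √((1 - r) * ((N - 2) * r + N) / N) := by
  apply le_sqrt_of_sq_le
  have hgap : (1 - r) * ((N - 2) * r + N) / N - (1 + μ * r) ^ 2 =
      -(r * (2 * μ + 2 / N + r * (μ ^ 2 + 1 - 2 / N))) := by
    field_simp
    ring
  linarith

lemma le_rho_of_chord {N r μ : ℝ} (hN : 1 < N)
    (h : r * (2 * μ + 2 / N + r * (μ ^ 2 + 1 - 2 / N)) ≤ 0) :
    N / (N - 1) * (3 / 2 * r + (N + 2) / (2 * (N - 1)) * (2 + (μ - 1) * r)) ≤ rho N r 0 := by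
  have hN0 : 0 < N := by linarith
  have hN1 : 0 < N - 1 := by linarith
  calc N / (N - 1) * (3 / 2 * r + (N + 2) / (2 * (N - 1)) * (2 + (μ - 1) * r))
      = N / (N - 1) * (3 / 2 * r + (N + 2) / (2 * (N - 1)) * (1 - r + (1 + μ * r))) := by ring
    _ ≤ N / (N - 1) * (3 / 2 * r + (N + 2) / (2 * (N - 1)) *
          (1 - r + √((1 - r) * ((N - 2) * r + N) / N))) := by
        gcongr
        exact one_add_mul_le_sqrt hN0.ne' h
    _ = rho N r 0 := by
        rw [rho]
        field_simp
        ring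

-- In these parameters, the polynomial inequalities in `N` and `x` needed below only have
-- coefficients of one sign once denominators are cleared, so that `positivity` proves them.
lemma exists_quadrant_parameters {N x : ℝ} (hN : 5 ≤ N) (hx : 0 < x)
    (hxN : N ^ 2 * x ≤ 4 * (N - 2)) :
    ∃ v w : ℝ, 0 ≤ v ∧ 0 ≤ w ∧ N = 5 + v ∧ x = 4 * (3 + v) / ((5 + v) ^ 2 * (1 + w)) := by
  have : 0 < N := by linarith
  have hNx : 0 < N ^ 2 * x := by positivity
  refine ⟨N - 5, 4 * (N - 2) / (N ^ 2 * x) - 1, by linarith, ?_, by ring, ?_⟩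
  · rwa [sub_nonneg, one_le_div hNx]
  · have : N - 2 ≠ 0 := by linarith
    rw [show 5 + (N - 5) = N by ring, show 3 + (N - 5) = N - 2 by ring]
    field_simp
    ring

lemma lt_two_thirds_of_sq_mul_le {N x : ℝ} (hxN : N ^ 2 * x ≤ 4 * (N - 2)) : x < 2 / 3 := by
  by_contra! h
  nlinarith [sq_nonneg (N - 3), mul_le_mul_of_nonneg_left h (sq_nonneg N)]

lemma sq_mul_le_of_le_mul {N x c : ℝ} (hc0 : 0 < c) (hc : c ≤ 1 / 2)
    (hcN : N ^ 2 - 2 * N + 4 ≤ N ^ 2 * (2 - x) * c) : N ^ 2 * x ≤ 4 * (N - 2) := by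
  have hK : 0 < N ^ 2 - 2 * N + 4 := by nlinarith [sq_nonneg (N - 1)]
  have hpos : 0 < N ^ 2 * (2 - x) := pos_of_mul_pos_left (hK.trans_le hcN) hc0.le
  linarith [mul_le_mul_of_nonneg_left hc hpos.le]

lemma lowerFst_le_rho {N x : ℝ} (hN : 5 ≤ N) (hx : 0 < x) (hxN : N ^ 2 * x ≤ 4 * (N - 2)) :
    lowerFst N x ≤ rho N (-3 / 2 * x) 0 := by
  have hN1 : N - 1 ≠ 0 := by linarith
  refine le_trans (le_of_eq ?_)
    (le_rho_of_chord (μ := 2 * (N - 4) / (N * (N + 2))) (by linarith) ?_)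
  · rw [lowerFst]
    field_simp
    ring
  · apply mul_nonpos_of_nonpos_of_nonneg (by linarith)
    obtain ⟨v, w, hv, hw, rfl, rfl⟩ := exists_quadrant_parameters hN hx hxN
    field_simp
    ring_nf
    positivity

lemma lowerSnd_div_le_rho {N x : ℝ} (hN : 5 ≤ N) (hx : 0 < x)
    (hxN : N ^ 2 * x ≤ 4 * (N - 2)) :
    lowerSnd N x / (1 - x) ≤ rho N (x / (2 * (1 - x))) 0 := by
  have hN1 : N - 1 ≠ 0 := by linarith
  have hx1 : 0 < 1 - x := by linarith [lt_two_thirds_of_sq_mul_le hxN]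
  refine le_trans (le_of_eq ?_) (le_rho_of_chord (μ := -2 / N) (by linarith) ?_)
  · rw [lowerSnd]
    field_simp
    ring
  · apply mul_nonpos_of_nonneg_of_nonpos (by positivity)
    have hslope : 2 * (-2 / N) + 2 / N + x / (2 * (1 - x)) * ((-2 / N) ^ 2 + 1 - 2 / N) =
        (x * (N ^ 2 - 2 * N + 4) - 4 * N * (1 - x)) / (2 * (1 - x) * N ^ 2) := by
      field_simp
      ring
    rw [hslope]
    refine div_nonpos_of_nonpos_of_nonneg ?_ (by positivity)
    have : 0 ≤ 8 * x := by positivity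
    nlinarith

end ChordBounds

section PolynomialInequalities

lemma three_halves_mul_lt_lowerFst {N x : ℝ} (hN : 5 ≤ N) (hx : 0 < x)
    (hxN : N ^ 2 * x ≤ 4 * (N - 2)) : 3 / 2 * x < lowerFst N x := by
  obtain ⟨v, w, hv, hw, rfl, rfl⟩ := exists_quadrant_parameters hN hx hxN
  rw [lowerFst, show 5 + v - 1 = 4 + v by ring]
  field_simp
  rw [← sub_pos]
  ring_nf
  positivity

lemma lt_two_mul_lowerFst_sq {N x : ℝ} (hN : 5 ≤ N) (hx : 0 < x)
    (hxN : N ^ 2 * x ≤ 4 * (N - 2)) :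
    3 / 2 * (1 + x) - 9 / 4 * x * (1 - x) < 2 * lowerFst N x ^ 2 := by
  obtain ⟨v, w, hv, hw, rfl, rfl⟩ := exists_quadrant_parameters hN hx hxN
  rw [lowerFst, show 5 + v - 1 = 4 + v by ring]
  field_simp
  rw [← sub_pos]
  ring_nf
  positivity

lemma half_lt_lowerSnd {N x : ℝ} (hN : 5 ≤ N) (hx : 0 < x) (hxN : N ^ 2 * x ≤ 4 * (N - 2)) :
    x / 2 < lowerSnd N x := by
  obtain ⟨v, w, hv, hw, rfl, rfl⟩ := exists_quadrant_parameters hN hx hxN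
  rw [lowerSnd, show 5 + v - 1 = 4 + v by ring]
  field_simp
  rw [← sub_pos]
  ring_nf
  positivity

lemma lt_lowerSnd_div {N x : ℝ} (hN : 5 ≤ N) (hx : 0 < x) (hxN : N ^ 2 * x ≤ 4 * (N - 2)) :
    x / (2 * (1 - x)) < lowerSnd N x / (1 - x) := by
  have hx1 : 0 < 1 - x := by linarith [lt_two_thirds_of_sq_mul_le hxN]
  rw [← div_div]
  gcongr
  exact half_lt_lowerSnd hN hx hxN

lemma lowerFst_mul_lowerSnd_lt {N x : ℝ} (hN : 5 ≤ N) (hx : 0 < x)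
    (hxN : N ^ 2 * x ≤ 4 * (N - 2)) :
    lowerFst N x * lowerSnd N x * (1 + x) ^ 2 < (lowerFst N x + 3 / 2 * x) *
      ((lowerFst N x + 1) * (1 + x) - (1 - x) * (lowerFst N x + 3 / 2 * x)) *
      (lowerSnd N x - x / 2) * (1 - x / 2) := by
  obtain ⟨v, w, hv, hw, rfl, rfl⟩ := exists_quadrant_parameters hN hx hxN
  rw [lowerFst, lowerSnd, show 5 + v - 1 = 4 + v by ring]
  field_simp
  rw [← sub_pos]
  -- Without the factor `(5 + v) ^ 2`, one coefficient is negative.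
  refine pos_of_mul_pos_left (b := (5 + v) ^ 2) ?_ (by positivity)
  ring_nf
  positivity

set_option maxRecDepth 10000 in
set_option maxHeartbeats 400000 in
-- The polynomial in `v` and `w` has about 180 monomials.
lemma lowerFst_mul_lowerSnd_mul_lt {N x K P Q : ℝ} (hN : 5 ≤ N) (hx : 0 < x)
    (hxN : N ^ 2 * x ≤ 4 * (N - 2)) (hK : K = N ^ 2 - 2 * N + 4)
    (hP : P = N ^ 2 * (2 - x) - (1 - x) * K) (hQ : Q = N ^ 2 * (2 - x) - K) :
    lowerFst N x * lowerSnd N x * P ^ 2 * Q ^ 2 < K ^ 2 * (lowerFst N x + 3 / 2 * x) *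
      ((lowerFst N x + 1) * P - (1 - x) * K * (lowerFst N x + 3 / 2 * x)) *
      (lowerSnd N x - x / 2) * ((lowerSnd N x + 1 - x) * Q - K * (lowerSnd N x - x / 2)) := by
  subst hK hP hQ
  obtain ⟨v, w, hv, hw, rfl, rfl⟩ := exists_quadrant_parameters hN hx hxN
  rw [lowerFst, lowerSnd, show 5 + v - 1 = 4 + v by ring]
  field_simp
  rw [← sub_pos]
  ring_nf
  positivity

end PolynomialInequalities

section Endpoints

lemma one_lt_ratio_mul_ratio_of_lt {L W x K P Q : ℝ} (hL : 3 / 2 * x < L) (hW : x / 2 < W)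
    (hx : 0 < x) (hx1 : x < 1) (hK : 0 < K) (hP : 0 < P) (hQ : 0 < Q)
    (h : L * W * P ^ 2 * Q ^ 2 < K ^ 2 * (L + 3 / 2 * x) *
      ((L + 1) * P - (1 - x) * K * (L + 3 / 2 * x)) * (W - x / 2) *
      ((W + 1 - x) * Q - K * (W - x / 2))) :
    1 < ratio L (-3 / 2 * x) ((1 - x) * K / P) *
      ratio (W / (1 - x)) (x / (2 * (1 - x))) (K / Q) := by
  have hL0 : 0 < L := by linarith
  have hW0 : 0 < W := by linarith
  have hx1' : 0 < 1 - x := sub_pos.2 hx1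
  have hprod : ratio L (-3 / 2 * x) ((1 - x) * K / P) *
      ratio (W / (1 - x)) (x / (2 * (1 - x))) (K / Q) =
      K ^ 2 * (L + 3 / 2 * x) * ((L + 1) * P - (1 - x) * K * (L + 3 / 2 * x)) * (W - x / 2) *
        ((W + 1 - x) * Q - K * (W - x / 2)) / (L * W * P ^ 2 * Q ^ 2) := by
    rw [ratio, ratio]
    field_simp
    ring
  rwa [hprod, one_lt_div (by positivity)]

lemma one_lt_ratio_mul_ratio_right {N x : ℝ} (hN : 5 ≤ N) (hx : 0 < x)
    (hxN : N ^ 2 * x ≤ 4 * (N - 2)) :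
    1 < ratio (lowerFst N x) (-3 / 2 * x) ((1 - x) * (1 / 2) / (1 - (1 - x) * (1 / 2))) *
      ratio (lowerSnd N x / (1 - x)) (x / (2 * (1 - x))) (1 / 2 / (1 - 1 / 2)) := by
  have hx1 : x < 1 := (lt_two_thirds_of_sq_mul_le hxN).trans (by norm_num)
  refine one_lt_ratio_mul_ratio_of_lt (three_halves_mul_lt_lowerFst hN hx hxN)
    (half_lt_lowerSnd hN hx hxN) hx hx1 (by norm_num) (by linarith) (by norm_num) ?_
  have := lowerFst_mul_lowerSnd_lt hN hx hxN
  linarith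

lemma one_lt_ratio_mul_ratio_left {N x c : ℝ} (hN : 5 ≤ N) (hx : 0 < x)
    (hxN : N ^ 2 * x ≤ 4 * (N - 2)) (hc : c = (N ^ 2 - 2 * N + 4) / (N ^ 2 * (2 - x))) :
    1 < ratio (lowerFst N x) (-3 / 2 * x) ((1 - x) * c / (1 - (1 - x) * c)) *
      ratio (lowerSnd N x / (1 - x)) (x / (2 * (1 - x))) (c / (1 - c)) := by
  have hx1 : x < 1 := (lt_two_thirds_of_sq_mul_le hxN).trans (by norm_num)
  have hD : 0 < N ^ 2 * (2 - x) := by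
    have : 0 < 2 - x := by linarith
    positivity
  have hK : 0 < N ^ 2 - 2 * N + 4 := by nlinarith
  have hQ : 0 < N ^ 2 * (2 - x) - (N ^ 2 - 2 * N + 4) := by nlinarith
  have hP : 0 < N ^ 2 * (2 - x) - (1 - x) * (N ^ 2 - 2 * N + 4) := by nlinarith [mul_pos hx hK]
  have hfst : (1 - x) * c / (1 - (1 - x) * c) = (1 - x) * (N ^ 2 - 2 * N + 4) /
      (N ^ 2 * (2 - x) - (1 - x) * (N ^ 2 - 2 * N + 4)) := by
    rw [hc, ← mul_div_assoc, one_sub_div hD.ne', div_div_div_cancel_right₀ hD.ne']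
  have hsnd : c / (1 - c) = (N ^ 2 - 2 * N + 4) / (N ^ 2 * (2 - x) - (N ^ 2 - 2 * N + 4)) := by
    rw [hc, one_sub_div hD.ne', div_div_div_cancel_right₀ hD.ne']
  rw [hfst, hsnd]
  exact one_lt_ratio_mul_ratio_of_lt (three_halves_mul_lt_lowerFst hN hx hxN)
    (half_lt_lowerSnd hN hx hxN) hx hx1 hK hP hQ
    (lowerFst_mul_lowerSnd_mul_lt hN hx hxN rfl rfl rfl)

lemma one_lt_ratio_lowerFst_mul_ratio_lowerSnd {N x c : ℝ} (hN : 5 ≤ N) (hx : 0 < x)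
    (hc0 : 0 < c) (hc : c ≤ 1 / 2) (hcN : N ^ 2 - 2 * N + 4 ≤ N ^ 2 * (2 - x) * c) :
    1 < ratio (lowerFst N x) (-3 / 2 * x) ((1 - x) * c / (1 - (1 - x) * c)) *
      ratio (lowerSnd N x / (1 - x)) (x / (2 * (1 - x))) (c / (1 - c)) := by
  have hxN := sq_mul_le_of_le_mul hc0 hc hcN
  have hx23 := lt_two_thirds_of_sq_mul_le hxN
  have hx1 : 0 < 1 - x := by linarith
  have hx2 : 0 < 2 - x := by linarith
  have hL := three_halves_mul_lt_lowerFst hN hx hxN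
  have hs : 0 < x / (2 * (1 - x)) := by positivity
  have hW := lt_lowerSnd_div hN hx hxN
  have hK : 0 < N ^ 2 - 2 * N + 4 := by nlinarith
  have hc₀ : (N ^ 2 - 2 * N + 4) / (N ^ 2 * (2 - x)) ≤ c := by
    rwa [div_le_iff₀' (by positivity)]
  exact one_lt_ratio_mul_ratio_of_endpoints (by linarith) (by linarith) (by linarith)
    (by linarith) (hs.trans hW) hW ⟨hx1, by linarith⟩ (by positivity) le_rfl ⟨hc₀, hc⟩
    (one_lt_ratio_mul_ratio_left hN hx hxN rfl) (one_lt_ratio_mul_ratio_right hN hx hxN)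

end Endpoints

section SmallShifts

lemma delta_lowerFst_pos {N x u : ℝ} (hN : 5 ≤ N) (hx : 0 < x) (hxN : N ^ 2 * x ≤ 4 * (N - 2))
    (hu : u * (1 + x) ≤ 1 - x) : 0 < delta (lowerFst N x) (-3 / 2 * x) u := by
  have hL := three_halves_mul_lt_lowerFst hN hx hxN
  have hsq : 0 ≤ lowerFst N x ^ 2 - (3 / 2 * x) ^ 2 :=
    sub_nonneg.2 (pow_le_pow_left₀ (by positivity) hL.le 2)
  have hmul : 0 < (1 + x) * delta (lowerFst N x) (-3 / 2 * x) u := by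
    calc 0 < x * (2 * lowerFst N x ^ 2 - (3 / 2 * (1 + x) - 9 / 4 * x * (1 - x))) :=
          mul_pos hx (sub_pos.2 (lt_two_mul_lowerFst_sq hN hx hxN))
      _ ≤ x * (2 * lowerFst N x ^ 2 - (3 / 2 * (1 + x) - 9 / 4 * x * (1 - x))) +
          (1 - x - u * (1 + x)) * (lowerFst N x ^ 2 - (3 / 2 * x) ^ 2) :=
          le_add_of_nonneg_right (mul_nonneg (sub_nonneg.2 hu) hsq)
      _ = (1 + x) * delta (lowerFst N x) (-3 / 2 * x) u := by
          rw [delta]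
          ring
  exact pos_of_mul_pos_right hmul (by positivity)

lemma delta_pos_of_pos {ρ r u : ℝ} (hr : 0 < r) (hu0 : 0 ≤ u) (hu1 : u ≤ 1) :
    0 < delta ρ r u := by
  have := sub_nonneg.2 hu1
  unfold delta
  positivity

lemma continuous_rho (N r : ℝ) : Continuous (rho N r) := by
  unfold rho
  fun_prop

lemma eventually_isSmallShift {N r u : ℝ}
    (hS : 0 < √((1 - r) * ((N - 2) * r + N) / N)) (hρ : 0 < rho N r 0) (hrρ : r < rho N r 0)
    (hδ : 0 < delta (rho N r 0) r u) : ∀ᶠ ε in 𝓝[>] 0, IsSmallShift N r u ε := by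
  have hcont := (continuous_rho N r).continuousAt (x := 0)
  have hδcont : ContinuousAt (fun ε => delta (rho N r ε) r u) 0 := by
    unfold delta
    fun_prop
  have hlin : ContinuousAt (fun ε : ℝ => (N - 1) / N * ε) 0 := by fun_prop
  filter_upwards [self_mem_nhdsWithin,
    nhdsWithin_le_nhds (hlin.eventually_lt_const (by simpa only [mul_zero] using hS)),
    nhdsWithin_le_nhds (hcont.eventually_const_lt hρ),
    nhdsWithin_le_nhds (hcont.eventually_const_lt hrρ),
    nhdsWithin_le_nhds (hδcont.eventually_const_lt hδ)] with ε h₁ h₂ h₃ h₄ h₅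
  exact ⟨h₁, h₂, h₃, h₄, h₅⟩

lemma eventually_one_lt_ratio_mul_ratio {N r s u U : ℝ} (hρ : rho N r 0 ≠ 0) (hσ : rho N s 0 ≠ 0)
    (h : 1 < ratio (rho N r 0) r u * ratio (rho N s 0) s U) :
    ∀ᶠ ε in 𝓝[>] 0, 1 < ratio (rho N r ε) r u * ratio (rho N s ε) s U := by
  have hcont : ContinuousAt (fun ε => ratio (rho N r ε) r u * ratio (rho N s ε) s U) 0 := by
    have hr := (continuous_rho N r).continuousAt (x := 0)
    have hs := (continuous_rho N s).continuousAt (x := 0)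
    unfold ratio
    fun_prop (disch := assumption)
  exact nhdsWithin_le_nhds (hcont.eventually_const_lt h)

lemma sqrt_mul_div_pos {N r : ℝ} (hN : 2 ≤ N) (hr : -1 < r) (hr1 : r < 1) :
    0 < √((1 - r) * ((N - 2) * r + N) / N) := by
  have : 0 < 1 - r := sub_pos.2 hr1
  have h₂ : 0 < (N - 2) * r + N := by nlinarith
  have : 0 < N := by linarith
  positivity

lemma eventually_isSmallShift_fst {N x u : ℝ} (hN : 5 ≤ N) (hx : 0 < x)
    (hxN : N ^ 2 * x ≤ 4 * (N - 2)) (hu : u ≤ 1) (hux : u * (1 + x) ≤ 1 - x) :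
    ∀ᶠ ε in 𝓝[>] 0, IsSmallShift N (-3 / 2 * x) u ε := by
  have hx23 := lt_two_thirds_of_sq_mul_le hxN
  have hL := three_halves_mul_lt_lowerFst hN hx hxN
  have hLρ := lowerFst_le_rho hN hx hxN
  refine eventually_isSmallShift (sqrt_mul_div_pos (by linarith) (by linarith) (by linarith))
    (by linarith) (by linarith) ?_
  exact (delta_lowerFst_pos hN hx hxN hux).trans_le (delta_mono (by linarith) hLρ hu)

lemma eventually_isSmallShift_snd {N x u : ℝ} (hN : 5 ≤ N) (hx : 0 < x)
    (hxN : N ^ 2 * x ≤ 4 * (N - 2)) (hu0 : 0 ≤ u) (hu1 : u ≤ 1) :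
    ∀ᶠ ε in 𝓝[>] 0, IsSmallShift N (x / (2 * (1 - x))) u ε := by
  have hx23 := lt_two_thirds_of_sq_mul_le hxN
  have hx1 : 0 < 1 - x := by linarith
  have hs : 0 < x / (2 * (1 - x)) := by positivity
  have hs1 : x / (2 * (1 - x)) < 1 := by
    rw [div_lt_one (by positivity)]
    linarith
  have hσ := (lt_lowerSnd_div hN hx hxN).trans_le (lowerSnd_div_le_rho hN hx hxN)
  exact eventually_isSmallShift (sqrt_mul_div_pos (by linarith) (by linarith) hs1)
    (hs.trans hσ) hσ (delta_pos_of_pos hs hu0 hu1)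

lemma exists_isSmallShift_one_lt_ratio_mul_ratio {N x c : ℝ} (hN : 5 ≤ N) (hx : 0 < x)
    (hc0 : 0 < c) (hc : c ≤ 1 / 2) (hcN : N ^ 2 - 2 * N + 4 ≤ N ^ 2 * (2 - x) * c) :
    ∃ ε, IsSmallShift N (-3 / 2 * x) ((1 - x) * c / (1 - (1 - x) * c)) ε ∧
      IsSmallShift N (x / (2 * (1 - x))) (c / (1 - c)) ε ∧
      1 < ratio (rho N (-3 / 2 * x) ε) (-3 / 2 * x) ((1 - x) * c / (1 - (1 - x) * c)) *
        ratio (rho N (x / (2 * (1 - x))) ε) (x / (2 * (1 - x))) (c / (1 - c)) := by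
  have hxN := sq_mul_le_of_le_mul hc0 hc hcN
  have hx23 := lt_two_thirds_of_sq_mul_le hxN
  have hx1 : 0 < 1 - x := by linarith
  have hmem : (1 - x) * c ∈ Set.Ioc 0 (1 / 2) := ⟨by positivity, by nlinarith⟩
  have hu := div_one_sub_mem_Ioc hmem
  have hU := div_one_sub_mem_Ioc ⟨hc0, hc⟩
  have hux : (1 - x) * c / (1 - (1 - x) * c) * (1 + x) ≤ 1 - x := by
    rw [div_mul_eq_mul_div, div_le_iff₀ (by linarith [hmem.2])]
    nlinarith
  have hL : 0 < lowerFst N x := by linarith [three_halves_mul_lt_lowerFst hN hx hxN]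
  have hLρ := lowerFst_le_rho hN hx hxN
  have hs : 0 < x / (2 * (1 - x)) := by positivity
  have hsW := lt_lowerSnd_div hN hx hxN
  have hWσ := lowerSnd_div_le_rho hN hx hxN
  have hratio := (one_lt_ratio_lowerFst_mul_ratio_lowerSnd hN hx hc0 hc hcN).trans_le <|
    mul_le_mul (ratio_mono hL hLρ hu.1.le hu.2 (delta_lowerFst_pos hN hx hxN hux).le)
      (ratio_mono (hs.trans hsW) hWσ hU.1.le hU.2 (delta_pos_of_pos hs hU.1.le hU.2).le)
      (ratio_pos (by linarith) (hs.trans hsW) hsW hU).le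
      (ratio_pos (by linarith) (hL.trans_le hLρ) (by linarith) hu).le
  exact ((eventually_isSmallShift_fst hN hx hxN hu.2 hux).and <|
    (eventually_isSmallShift_snd hN hx hxN hU.1.le hU.2).and <|
    eventually_one_lt_ratio_mul_ratio (hL.trans_le hLρ).ne' ((hs.trans hsW).trans_le hWσ).ne'
      hratio).exists

end SmallShifts

section Coefficients

lemma coefficients_pos {N p r ε k ρ θ δ α β γ u : ℝ} (hN : 1 < N) (hu : 0 < u) (hu1 : u ≤ 1)
    (hr : -1 < r) (hε : IsSmallShift N r u ε) (hp : p = u⁻¹)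
    (hk : k = N / (2 * (N - 1)) * (r - 1 - √((1 - r) * ((N - 2) * r + N) / N)) + ε)
    (hρ : ρ = N / (N - 1) * (3 / 2 * r - (N + 2) / N * k)) (hθ : θ = (ρ - r) / p)
    (hδ : δ = (r + θ * p) * (r + θ * (p - 2) + 1) + θ * (θ - 1) * p)
    (hα : α = -((N - 1) / N) * k ^ 2 + k * (r - 1) - r * (r - 1) / 2)
    (hβ : β = (3 / 2 * r - (N + 2) / N * k) * (2 * θ * (p - 1) + r + 1) / δ - (N - 1) / N)
    (hγ : γ = (3 / 2 * r - (N + 2) / N * k) * p / δ) :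
    0 < α ∧ 0 < β ∧ 0 < γ ∧ β = γ * ratio (rho N r ε) r u := by
  have hN0 : 0 < N := by linarith
  have hN1 : 0 < N - 1 := by linarith
  have hρε : ρ = rho N r ε := by rw [hρ, hk, rho]
  obtain ⟨hε0, hεS, hρ0, hrρ, hδ0⟩ := hε
  rw [← hρε] at hρ0 hrρ hδ0 ⊢
  have hA : 3 / 2 * r - (N + 2) / N * k = (N - 1) / N * ρ := by
    rw [hρ]
    field_simp
  have hδρ : δ = delta ρ r u := by
    rw [hδ, hθ, hp, delta]
    field_simp
    ring
  rw [hA, hδρ, hp] at hγ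
  have hγ0 : 0 < γ := by
    rw [hγ]
    positivity
  have hβγ : β = γ * ratio ρ r u := by
    rw [hβ, hγ, hA, hδρ, hθ, hp, ratio]
    field_simp
    rw [delta]
    ring
  refine ⟨?_, ?_, hγ0, hβγ⟩
  · set S := √((1 - r) * ((N - 2) * r + N) / N)
    have hS0 : 0 < S := lt_trans (by positivity) hεS
    have hS2 : S ^ 2 = (1 - r) * ((N - 2) * r + N) / N := sq_sqrt (sqrt_pos.1 hS0).le
    have hαε : α = ε * (S - (N - 1) / N * ε) +
        N / (4 * (N - 1)) * ((1 - r) * ((N - 2) * r + N) / N - S ^ 2) := by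
      rw [hα, hk]
      field_simp
      ring
    rw [hαε, hS2, sub_self, mul_zero, add_zero]
    exact mul_pos hε0 (sub_pos.2 hεS)
  · rw [hβγ]
    exact mul_pos hγ0 (ratio_pos hr hρ0 hrρ ⟨hu, hu1⟩)

lemma eq_inv_div_one_sub {p c : ℝ} (hc : c ≠ 0) (h : 1 / (p + 1) = c) :
    p = (c / (1 - c))⁻¹ := by
  have hp : p + 1 ≠ 0 := by
    intro hp
    rw [hp, div_zero] at h
    exact hc h.symm
  subst h
  field_simp
  ring

lemma exists_reparametrization {N d₁ d₂ : ℝ} (hN : 5 ≤ N) (h₂ : 0 ≤ d₂) (h₂₁ : d₂ < d₁)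
    (h₁ : d₁ < 2 - d₂ - 4 / N) :
    ∃ x c : ℝ, 0 < x ∧ 0 < c ∧ c ≤ 1 / 2 ∧ N ^ 2 - 2 * N + 4 ≤ N ^ 2 * (2 - x) * c ∧
      1 / 2 - d₁ / N = (1 - x) * c ∧ 1 / 2 - d₂ / N = c ∧
      -3 * (d₁ - d₂) / (N - 2 * d₂) = -3 / 2 * x ∧
      (d₁ - d₂) / (N - 2 * d₁) = x / (2 * (1 - x)) := by
  have hN0 : 0 < N := by linarith
  have h4 : 0 < 4 / N := by positivity
  have hb : 0 < N - 2 * d₂ := by linarith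
  have hx1 : 1 - 2 * (d₁ - d₂) / (N - 2 * d₂) = (N - 2 * d₁) / (N - 2 * d₂) := by
    rw [one_sub_div hb.ne']
    ring
  have hc : 1 / 2 - d₂ / N = (N - 2 * d₂) / (2 * N) := by
    rw [div_sub_div _ _ two_ne_zero hN0.ne', one_mul]
  refine ⟨2 * (d₁ - d₂) / (N - 2 * d₂), (N - 2 * d₂) / (2 * N), div_pos (by linarith) hb,
    by positivity, ?_, ?_, ?_, hc, by ring, ?_⟩
  · rw [← hc]
    exact sub_le_self _ (by positivity)
  · calc N ^ 2 - 2 * N + 4 = N ^ 2 - N * (2 - 4 / N) := by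
          field_simp
          ring
      _ ≤ N ^ 2 - N * (d₁ + d₂) := by
          gcongr
          linarith
      _ = N ^ 2 * ((2 * N - 2 * d₁ - 2 * d₂) / (N - 2 * d₂)) * ((N - 2 * d₂) / (2 * N)) := by
          rw [mul_assoc, div_mul_div_cancel₀ hb.ne']
          field_simp
          ring
      _ = N ^ 2 * (2 - 2 * (d₁ - d₂) / (N - 2 * d₂)) * ((N - 2 * d₂) / (2 * N)) := by
          rw [sub_div' hb.ne']
          ring
  · rw [hx1, div_mul_div_cancel₀ hb.ne', div_sub_div _ _ two_ne_zero hN0.ne', one_mul]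
  · rw [hx1, ← mul_div_assoc, div_div_div_cancel_right₀ hb.ne', mul_div_mul_left _ _ two_ne_zero]

end Coefficients

theorem positivity_condition_low_dimension_general (N : ℝ) (hN : 5 ≤ N) :
    ∀ d₁ d₂ : ℝ, 0 ≤ d₂ → d₂ < d₁ → d₁ < 2 - d₂ - 4 / N →
    ∃ ε₀ : ℝ, 0 < ε₀ ∧
      ∀ p q r s k₁ k₂ ρ₁ ρ₂ θ₁ θ₂ δ₁ δ₂ α₁ α₂ β₁ β₂ γ₁ γ₂ : ℝ,
        1 / (p + 1) = 1 / 2 - d₁ / N →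
        1 / (q + 1) = 1 / 2 - d₂ / N →
        r = -3 * (d₁ - d₂) / (N - 2 * d₂) →
        s = (d₁ - d₂) / (N - 2 * d₁) →
        k₁ = N / (2 * (N - 1)) *
            (r - 1 - Real.sqrt ((1 - r) * ((N - 2) * r + N) / N)) + ε₀ →
        k₂ = N / (2 * (N - 1)) *
            (s - 1 - Real.sqrt ((1 - s) * ((N - 2) * s + N) / N)) + ε₀ →
        ρ₁ = N / (N - 1) * ((3 / 2) * r - (N + 2) / N * k₁) →
        ρ₂ = N / (N - 1) * ((3 / 2) * s - (N + 2) / N * k₂) →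
        θ₁ = (ρ₁ - r) / p →
        θ₂ = (ρ₂ - s) / q →
        δ₁ = (r + θ₁ * p) * (r + θ₁ * (p - 2) + 1) + θ₁ * (θ₁ - 1) * p →
        δ₂ = (s + θ₂ * q) * (s + θ₂ * (q - 2) + 1) + θ₂ * (θ₂ - 1) * q →
        α₁ = -((N - 1) / N) * k₁ ^ 2 + k₁ * (r - 1) - r * (r - 1) / 2 →
        α₂ = -((N - 1) / N) * k₂ ^ 2 + k₂ * (s - 1) - s * (s - 1) / 2 →
        β₁ = ((3 / 2) * r - (N + 2) / N * k₁) *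
            (2 * θ₁ * (p - 1) + r + 1) / δ₁ - (N - 1) / N →
        β₂ = ((3 / 2) * s - (N + 2) / N * k₂) *
            (2 * θ₂ * (q - 1) + s + 1) / δ₂ - (N - 1) / N →
        γ₁ = ((3 / 2) * r - (N + 2) / N * k₁) * p / δ₁ →
        γ₂ = ((3 / 2) * s - (N + 2) / N * k₂) * q / δ₂ →
        0 < α₁ ∧ 0 < α₂ ∧ 0 < β₁ ∧ 0 < β₂ ∧ 0 < γ₁ ∧ 0 < γ₂ ∧
          0 < β₁ * β₂ - γ₁ * γ₂ := by
  intro d₁ d₂ hd₂ hd₂₁ hd₁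
  obtain ⟨x, c, hx, hc0, hc, hcN, hc₁, hc₂, hr', hs'⟩ :=
    exists_reparametrization hN hd₂ hd₂₁ hd₁
  obtain ⟨ε, hε₁, hε₂, hratio⟩ := exists_isSmallShift_one_lt_ratio_mul_ratio hN hx hc0 hc hcN
  have hx23 := lt_two_thirds_of_sq_mul_le (sq_mul_le_of_le_mul hc0 hc hcN)
  have hx1 : 0 < 1 - x := by linarith
  have hs0 : 0 < x / (2 * (1 - x)) := by positivity
  have hxc : (1 - x) * c ∈ Set.Ioc 0 (1 / 2) := ⟨by positivity, by nlinarith⟩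
  have hu := div_one_sub_mem_Ioc hxc
  have hU := div_one_sub_mem_Ioc ⟨hc0, hc⟩
  refine ⟨ε, hε₁.pos, ?_⟩
  intro p q r s k₁ k₂ ρ₁ ρ₂ θ₁ θ₂ δ₁ δ₂ α₁ α₂ β₁ β₂ γ₁ γ₂ hp hq hr hs hk₁ hk₂ hρ₁ hρ₂
    hθ₁ hθ₂ hδ₁ hδ₂ hα₁ hα₂ hβ₁ hβ₂ hγ₁ hγ₂
  obtain rfl := hr.trans hr'
  obtain rfl := hs.trans hs'
  obtain ⟨hα₁0, hβ₁0, hγ₁0, hβγ₁⟩ := coefficients_pos (by linarith) hu.1 hu.2 (by linarith) hε₁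
    (eq_inv_div_one_sub hxc.1.ne' (hp.trans hc₁)) hk₁ hρ₁ hθ₁ hδ₁ hα₁ hβ₁ hγ₁
  obtain ⟨hα₂0, hβ₂0, hγ₂0, hβγ₂⟩ := coefficients_pos (by linarith) hU.1 hU.2 (by linarith) hε₂
    (eq_inv_div_one_sub hc0.ne' (hq.trans hc₂)) hk₂ hρ₂ hθ₂ hδ₂ hα₂ hβ₂ hγ₂
  refine ⟨hα₁0, hα₂0, hβ₁0, hβ₂0, hγ₁0, hγ₂0, ?_⟩
  rw [sub_pos, hβγ₁, hβγ₂, mul_mul_mul_comm]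
  exact lt_mul_of_one_lt_right (mul_pos hγ₁0 hγ₂0) hratio

theorem positivity_condition_low_dimension (n : ℕ) (hn5 : 5 ≤ n)
    (hn12 : n ≤ 12) :
    ∀ d₁ d₂ : ℝ, 0 ≤ d₂ → d₂ < d₁ → d₁ < 2 - d₂ - 4 / (n : ℝ) →
    ∃ ε₀ : ℝ, 0 < ε₀ ∧
      ∀ p q r s k₁ k₂ ρ₁ ρ₂ θ₁ θ₂ δ₁ δ₂ α₁ α₂ β₁ β₂ γ₁ γ₂ : ℝ,
        1 / (p + 1) = 1 / 2 - d₁ / (n : ℝ) →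
        1 / (q + 1) = 1 / 2 - d₂ / (n : ℝ) →
        r = -3 * (d₁ - d₂) / ((n : ℝ) - 2 * d₂) →
        s = (d₁ - d₂) / ((n : ℝ) - 2 * d₁) →
        k₁ = (n : ℝ) / (2 * ((n : ℝ) - 1)) *
            (r - 1 - Real.sqrt ((1 - r) * (((n : ℝ) - 2) * r + n) / n)) + ε₀ →
        k₂ = (n : ℝ) / (2 * ((n : ℝ) - 1)) *
            (s - 1 - Real.sqrt ((1 - s) * (((n : ℝ) - 2) * s + n) / n)) + ε₀ →
        ρ₁ = (n : ℝ) / ((n : ℝ) - 1) * ((3 / 2) * r - ((n : ℝ) + 2) / n * k₁) →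
        ρ₂ = (n : ℝ) / ((n : ℝ) - 1) * ((3 / 2) * s - ((n : ℝ) + 2) / n * k₂) →
        θ₁ = (ρ₁ - r) / p →
        θ₂ = (ρ₂ - s) / q →
        δ₁ = (r + θ₁ * p) * (r + θ₁ * (p - 2) + 1) + θ₁ * (θ₁ - 1) * p →
        δ₂ = (s + θ₂ * q) * (s + θ₂ * (q - 2) + 1) + θ₂ * (θ₂ - 1) * q →
        α₁ = -(((n : ℝ) - 1) / n) * k₁ ^ 2 + k₁ * (r - 1) - r * (r - 1) / 2 →
        α₂ = -(((n : ℝ) - 1) / n) * k₂ ^ 2 + k₂ * (s - 1) - s * (s - 1) / 2 →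
        β₁ = ((3 / 2) * r - ((n : ℝ) + 2) / n * k₁) *
            (2 * θ₁ * (p - 1) + r + 1) / δ₁ - ((n : ℝ) - 1) / n →
        β₂ = ((3 / 2) * s - ((n : ℝ) + 2) / n * k₂) *
            (2 * θ₂ * (q - 1) + s + 1) / δ₂ - ((n : ℝ) - 1) / n →
        γ₁ = ((3 / 2) * r - ((n : ℝ) + 2) / n * k₁) * p / δ₁ →
        γ₂ = ((3 / 2) * s - ((n : ℝ) + 2) / n * k₂) * q / δ₂ →
        0 < α₁ ∧ 0 < α₂ ∧ 0 < β₁ ∧ 0 < β₂ ∧ 0 < γ₁ ∧ 0 < γ₂ ∧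
          0 < β₁ * β₂ - γ₁ * γ₂ :=
  positivity_condition_low_dimension_general n (by exact_mod_cast hn5)
end
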